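/- arXiv:2304.07439 — 2 statements merged into one kernel-verified Lean document; each statement's English description precedes it below -/
import Mathlib

section
/- The vertex operator components Q_m defined by Q(z) = exp(∑_{n≥1 odd} (2/n) p_n z^n)·exp(-∑_{n≥1 odd} ∂/∂p_n · z^{-n}) = ∑_{n∈ℤ} Q_n z^n acting on the ring Γ = ℚ[p_1, p_3, p_5, ...] satisfy the Clifford relations Q_m Q_n + Q_n Q_m = (-1)^n · 2·δ_{m,-n} for all integers m, n. -/
open MvPolynomial Finset

noncomputable section
open scoped Classical

/-- Index set of odd positive integers (odd power sums). -/
abbrev OddIdx := {n : ℕ // Odd n}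

/-- The ring Γ = F[p₁, p₃, p₅, …]. -/
abbrev Gam (F : Type) [Field F] := MvPolynomial OddIdx F

variable {F : Type} [Field F] [CharZero F]

/-- The power sum p_n (a variable for odd n, 0 otherwise). -/
def pvar (F : Type) [Field F] (n : ℕ) : Gam F := if h : Odd n then X ⟨n, h⟩ else 0

/-- p_ρ = ∏ p_{ρᵢ}. -/
def pprod (F : Type) [Field F] (ρ : Multiset ℕ) : Gam F := (ρ.map (pvar F)).prod

/-- ∂/∂p_n. -/
def pder (n : ℕ) (f : Gam F) : Gam F := if h : Odd n then pderiv (⟨n, h⟩ : OddIdx) f else 0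

/-- Composition of partial derivatives indexed by a multiset. -/
def Dmult (ρ : Multiset ℕ) (f : Gam F) : Gam F := ρ.toList.foldr pder f

/-- ∏ᵢ mᵢ(ρ)!. -/
def aut (ρ : Multiset ℕ) : ℕ := ρ.toFinset.prod fun i => Nat.factorial (ρ.count i)

/-- z_ρ = ∏ᵢ i^{mᵢ(ρ)} mᵢ(ρ)!. -/
def zp (ρ : Multiset ℕ) : ℕ := ρ.prod * aut ρ

/-- Coefficient of z^m in exp(∑ₙ c_n p_n zⁿ). -/
def crea (c : ℕ → F) (m : ℤ) : Gam F :=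
  if 0 ≤ m then
    ∑ ρ : Nat.Partition m.toNat, (((ρ.parts.map c).prod) / (aut ρ.parts : F)) • pprod F ρ.parts
  else 0

/-- Coefficient of z^{-k} in exp(∑ₙ d_n (∂/∂p_n) z^{-n}), applied to f. -/
def annih (d : ℕ → F) (k : ℕ) (f : Gam F) : Gam F :=
  ∑ ρ : Nat.Partition k, (((ρ.parts.map d).prod) / (aut ρ.parts : F)) • Dmult ρ.parts f

/-- A bound beyond which all annihilation components kill f. -/
def bnd (f : Gam F) : ℕ := (f.totalDegree + 1) * ((f.vars.sup fun v => v.1) + 1) + 1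

/-- Coefficient of z^m in exp(∑ c_n p_n zⁿ)·exp(∑ d_n ∂/∂p_n z^{-n}), applied to f. -/
def vop (c d : ℕ → F) (m : ℤ) (f : Gam F) : Gam F :=
  ∑ k ∈ Finset.range (bnd f), crea c (m + k) * annih d k f

/-- c_n = 2/n for odd n: the creation coefficients for Schur's Q-functions. -/
def cQ (F : Type) [Field F] : ℕ → F := fun n => if Odd n then 2 / (n : F) else 0

/-- d_n = -1 for odd n: annihilation coefficients of Q(z). -/
def dQ (F : Type) [Field F] : ℕ → F := fun n => if Odd n then (-1 : F) else 0

/-- The component Q_m of the vertex operator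
  Q(z) = exp(∑_{n odd} (2/n) pₙ zⁿ) exp(-∑_{n odd} (∂/∂pₙ) z^{-n}). -/
def Qop (m : ℤ) (f : Gam F) : Gam F := vop (cQ F) (dQ F) m f

/-- The one-row Schur Q-function q_m (with q_m = 0 for m < 0, q₀ = 1). -/
def qel (F : Type) [Field F] [CharZero F] (m : ℤ) : Gam F := crea (cQ F) m

/-- Q_λ·1 = Q_{λ₁}⋯Q_{λ_l}·1. -/
def Qelem (F : Type) [Field F] [CharZero F] (l : List ℕ) : Gam F :=
  l.foldr (fun a g => Qop (a : ℤ) g) 1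

/-- The bilinear form on Γ with ⟨p_λ, p_μ⟩ = 2^{-ℓ(λ)} δ_{λμ} z_λ. -/
def formQ (f g : Gam F) : F :=
  ∑ m ∈ f.support, f.coeff m * g.coeff m *
    ((m.prod fun i k => (i.1 : F) ^ k * (Nat.factorial k : F)) / 2 ^ (m.sum fun _ k => k))

end

noncomputable section

/-!
Creation and annihilation parts are instances of one formal exponential `exp (∑ₙ xₙ zⁿ)` over a
commutative `F`-algebra, namely `Γ` and the algebra of constant-coefficient differential operators.
If `xₙ = 0` for even `n`, this exponential `E` satisfies `E(z) E(-z) = 1`.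

The annihilation part acts by Taylor's formula, that is, by the homomorphism `pₙ ↦ pₙ - z⁻ⁿ`. For
the creation and annihilation parts of `Q(z)` and `Q(w)`, moving the annihilation part in `z` past
the creation part in `w` therefore contributes the scalar
`exp (-∑_{n odd} (2/n) tⁿ) = (1 - t) / (1 + t)` with `t = w/z`. In the anticommutator the expansions
of this fraction in `t` and of its negative in `t⁻¹` add up to `2 ∑_{i ∈ ℤ} (-t)ⁱ`, a delta function
supported at `w = -z`. There both the creation and the annihilation parts cancel, by
`E(z) E(-z) = 1`.
-/

section ExpSeries

/-- The multisets of parts of the partitions of `k`: summing over this finset instead of the type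
`Nat.Partition k` lets parts be added and removed without transporting along equalities of `k`. -/
def partitionParts (k : ℕ) : Finset (Multiset ℕ) :=
  univ.image fun ρ : Nat.Partition k => ρ.parts

lemma mem_partitionParts {k : ℕ} {s : Multiset ℕ} :
    s ∈ partitionParts k ↔ (∀ i ∈ s, 0 < i) ∧ s.sum = k := by
  simp only [partitionParts, mem_image, mem_univ, true_and]
  constructor
  · rintro ⟨ρ, rfl⟩
    exact ⟨fun _ hi => ρ.parts_pos hi, ρ.parts_sum⟩
  · rintro ⟨hpos, hsum⟩
    exact ⟨⟨s, hpos _, hsum⟩, rfl⟩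

lemma sum_partitionParts {M : Type*} [AddCommMonoid M] (k : ℕ) (g : Multiset ℕ → M) :
    ∑ s ∈ partitionParts k, g s = ∑ ρ : Nat.Partition k, g ρ.parts :=
  sum_image fun _ _ _ _ h => Nat.Partition.ext h

lemma sum_partitionParts_erase {M : Type*} [AddCommMonoid M] (k : ℕ) (g : ℕ → Multiset ℕ → M) :
    ∑ s ∈ partitionParts (k + 1), ∑ n ∈ s.toFinset, g n (s.erase n)
      = ∑ p ∈ antidiagonal k, ∑ t ∈ partitionParts p.2, g (p.1 + 1) t := by
  rw [sum_sigma', sum_sigma']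
  refine sum_bij' (fun x _ => ⟨(x.2 - 1, k + 1 - x.2), x.1.erase x.2⟩)
    (fun y _ => ⟨(y.1.1 + 1) ::ₘ y.2, y.1.1 + 1⟩) ?_ ?_ ?_ ?_ ?_
  · rintro ⟨s, n⟩ h
    simp only [mem_sigma, mem_partitionParts, Multiset.mem_toFinset,
      HasAntidiagonal.mem_antidiagonal] at h ⊢
    obtain ⟨⟨hpos, hsum⟩, hn⟩ := h
    have := Multiset.sum_erase hn
    have := hpos n hn
    exact ⟨by omega, fun i hi => hpos i (Multiset.mem_of_mem_erase hi), by omega⟩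
  · rintro ⟨⟨i, j⟩, t⟩ h
    simp only [mem_sigma, mem_partitionParts, HasAntidiagonal.mem_antidiagonal] at h
    obtain ⟨hij, hpos, hsum⟩ := h
    simp only [mem_sigma, mem_partitionParts, Multiset.forall_mem_cons, Multiset.sum_cons,
      Multiset.mem_toFinset, Multiset.mem_cons_self, and_true]
    exact ⟨⟨by omega, hpos⟩, by omega⟩
  · rintro ⟨s, n⟩ h
    simp only [mem_sigma, mem_partitionParts, Multiset.mem_toFinset] at h
    simp [Nat.sub_add_cancel (h.1.1 n h.2), Multiset.cons_erase h.2]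
  · rintro ⟨⟨i, j⟩, t⟩ h
    simp only [mem_sigma, HasAntidiagonal.mem_antidiagonal] at h
    simp [← h.1]
  · rintro ⟨s, n⟩ h
    simp only [mem_sigma, mem_partitionParts, Multiset.mem_toFinset] at h
    rw [Nat.sub_add_cancel (h.1.1 n h.2)]

lemma aut_cons (n : ℕ) (s : Multiset ℕ) : aut (n ::ₘ s) = (s.count n + 1) * aut s := by
  have aut_eq_prod {t u : Multiset ℕ} (h : t ⊆ u) :
      aut t = ∏ i ∈ u.toFinset, (t.count i).factorial :=
    prod_subset (Multiset.toFinset_subset.2 h) fun i _ hi => by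
      simp [Multiset.count_eq_zero_of_notMem (mt Multiset.mem_toFinset.2 hi)]
  have hn : n ∈ (n ::ₘ s).toFinset := by simp
  rw [aut_eq_prod (Multiset.subset_cons s n), aut, ← mul_prod_erase _ _ hn,
    ← mul_prod_erase _ (fun i => (s.count i).factorial) hn, Multiset.count_cons_self,
    Nat.factorial_succ, mul_assoc]
  congr 2
  exact prod_congr rfl fun i hi => by rw [Multiset.count_cons_of_ne (ne_of_mem_erase hi)]

variable (F : Type*) [Field F] {A B : Type*} [CommRing A] [Algebra F A] [CommRing B] [Algebra F B]

/-- The formal exponential `exp (∑_{n ≥ 1} xₙ zⁿ)`, given by its expansion as a sum over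
partitions. As partitions have no part `0`, the value `x 0` does not enter. -/
def expSeries (x : ℕ → A) : PowerSeries A :=
  PowerSeries.mk fun k => ∑ s ∈ partitionParts k, (aut s : F)⁻¹ • (s.map x).prod

lemma coeff_expSeries (x : ℕ → A) (k : ℕ) :
    PowerSeries.coeff k (expSeries F x)
      = ∑ s ∈ partitionParts k, (aut s : F)⁻¹ • (s.map x).prod :=
  PowerSeries.coeff_mk _ _

lemma constantCoeff_expSeries (x : ℕ → A) :
    PowerSeries.constantCoeff (expSeries F x) = 1 := by
  rw [← PowerSeries.coeff_zero_eq_constantCoeff_apply, coeff_expSeries, sum_partitionParts]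
  simp [aut]

lemma map_expSeries (φ : A →ₐ[F] B) (x : ℕ → A) :
    PowerSeries.map (φ : A →+* B) (expSeries F x) = expSeries F (φ ∘ x) := by
  ext k
  simp [coeff_expSeries, map_sum, map_multiset_prod]

lemma rescale_expSeries (b : A) (x : ℕ → A) :
    PowerSeries.rescale b (expSeries F x) = expSeries F fun n => b ^ n * x n := by
  ext k
  rw [PowerSeries.coeff_rescale, coeff_expSeries, coeff_expSeries, mul_sum]
  refine sum_congr rfl fun s hs => ?_
  rw [Multiset.prod_map_mul, ← (mem_partitionParts.1 hs).2, mul_smul_comm]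
  congr 2
  exact s.induction_on (by simp) fun n t ih => by simp [ih, pow_add]

variable [CharZero F]

lemma count_mul_inv_aut_smul_prod (x : ℕ → A) {s : Multiset ℕ} {n : ℕ} (hn : n ∈ s) :
    (s.count n : A) * ((aut s : F)⁻¹ • (s.map x).prod)
      = x n * ((aut (s.erase n) : F)⁻¹ • ((s.erase n).map x).prod) := by
  obtain ⟨t, rfl⟩ := Multiset.exists_cons_of_mem hn
  have hcount : (t.count n + 1 : F) ≠ 0 := by exact_mod_cast (t.count n).succ_ne_zero
  have hinv : (t.count n + 1 : F) * (((t.count n + 1) * aut t : ℕ) : F)⁻¹ = (aut t : F)⁻¹ := by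
    push_cast
    field_simp
  rw [Multiset.erase_cons_head, aut_cons, Multiset.count_cons_self, Multiset.map_cons,
    Multiset.prod_cons, mul_smul_comm, mul_smul_comm, ← hinv, mul_smul, Algebra.smul_def (_ + 1)]
  simp

lemma succ_mul_coeff_expSeries (x : ℕ → A) (k : ℕ) :
    ((k : A) + 1) * PowerSeries.coeff (k + 1) (expSeries F x)
      = ∑ p ∈ antidiagonal k,
          ((p.1 : A) + 1) * x (p.1 + 1) * PowerSeries.coeff p.2 (expSeries F x) := by
  calc ((k : A) + 1) * PowerSeries.coeff (k + 1) (expSeries F x)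
      = ∑ s ∈ partitionParts (k + 1), ∑ n ∈ s.toFinset,
          (n : A) * x n * ((aut (s.erase n) : F)⁻¹ • ((s.erase n).map x).prod) := by
        rw [coeff_expSeries, mul_sum]
        refine sum_congr rfl fun s hs => ?_
        have hk : (k : A) + 1 = ∑ n ∈ s.toFinset, (n : A) * s.count n := by
          have h := (mem_partitionParts.1 hs).2
          rw [sum_multiset_count] at h
          simpa [mul_comm] using (congrArg (Nat.cast : ℕ → A) h).symm
        rw [hk, sum_mul]
        refine sum_congr rfl fun n hn => ?_
        rw [mul_assoc, count_mul_inv_aut_smul_prod F x (Multiset.mem_toFinset.1 hn), mul_assoc]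
    _ = _ := by
        rw [sum_partitionParts_erase k fun n t =>
          (n : A) * x n * ((aut t : F)⁻¹ • (t.map x).prod)]
        simp only [coeff_expSeries, mul_sum, Nat.cast_add, Nat.cast_one]

lemma derivative_expSeries (x : ℕ → A) :
    PowerSeries.derivative A (expSeries F x)
      = (PowerSeries.mk fun n => ((n : A) + 1) * x (n + 1)) * expSeries F x := by
  ext k
  rw [PowerSeries.coeff_derivative, mul_comm, succ_mul_coeff_expSeries, PowerSeries.coeff_mul]
  simp only [PowerSeries.coeff_mk]

lemma mul_expSeries_neg_eq_one {f : PowerSeries A} {x : ℕ → A}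
    (hderiv : PowerSeries.derivative A f
      = (PowerSeries.mk fun n => ((n : A) + 1) * x (n + 1)) * f)
    (hconst : PowerSeries.constantCoeff f = 1) : f * expSeries F (-x) = 1 := by
  have hneg : (PowerSeries.mk fun n => ((n : A) + 1) * (-x) (n + 1))
      = -PowerSeries.mk fun n => ((n : A) + 1) * x (n + 1) := by
    ext n
    simp
  have : IsAddTorsionFree A := .of_isTorsionFree F A
  apply PowerSeries.derivative.ext
  · simp only [Derivation.leibniz, hderiv, derivative_expSeries, hneg, smul_eq_mul,
      PowerSeries.derivative_one]
    ring
  · simp [hconst, constantCoeff_expSeries]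

lemma eq_expSeries_of_derivative {f : PowerSeries A} {x : ℕ → A}
    (hderiv : PowerSeries.derivative A f
      = (PowerSeries.mk fun n => ((n : A) + 1) * x (n + 1)) * f)
    (hconst : PowerSeries.constantCoeff f = 1) : f = expSeries F x := by
  have hf := mul_expSeries_neg_eq_one F hderiv hconst
  have hx := mul_expSeries_neg_eq_one F (derivative_expSeries F x) (constantCoeff_expSeries F x)
  rw [← mul_one f, ← hx, mul_left_comm, hf, mul_one]

lemma expSeries_add (x y : ℕ → A) : expSeries F (x + y) = expSeries F x * expSeries F y := by
  refine (eq_expSeries_of_derivative F ?_ (by simp [constantCoeff_expSeries])).symm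
  have hadd : (PowerSeries.mk fun n => ((n : A) + 1) * (x + y) (n + 1))
      = (PowerSeries.mk fun n => ((n : A) + 1) * x (n + 1))
        + PowerSeries.mk fun n => ((n : A) + 1) * y (n + 1) := by
    ext n
    simp [mul_add]
  rw [Derivation.leibniz, derivative_expSeries, derivative_expSeries, hadd, smul_eq_mul,
    smul_eq_mul]
  ring

lemma expSeries_zero : expSeries F (0 : ℕ → A) = 1 :=
  (eq_expSeries_of_derivative F (by simp [← Pi.zero_def, PowerSeries.ext_iff]) (by simp)).symm

lemma expSeries_mul_rescale_neg_one {x : ℕ → A} (hx : ∀ n, Even n → x n = 0) :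
    expSeries F x * PowerSeries.rescale (-1) (expSeries F x) = 1 := by
  have hcancel : (x + fun n => (-1) ^ n * x n) = 0 := by
    ext n
    rcases n.even_or_odd with hn | hn <;> simp [hx, hn]
  rw [rescale_expSeries, ← expSeries_add, hcancel, expSeries_zero]

lemma sum_expSeries_mul_expSeries {x : ℕ → A} (hx : ∀ n, Even n → x n = 0) (k : ℕ) :
    ∑ p ∈ antidiagonal k, (-1 : F) ^ p.2 •
        (PowerSeries.coeff p.1 (expSeries F x) * PowerSeries.coeff p.2 (expSeries F x))
      = if k = 0 then 1 else 0 := by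
  rw [← PowerSeries.coeff_one, ← expSeries_mul_rescale_neg_one F hx, PowerSeries.coeff_mul]
  simp [PowerSeries.coeff_rescale, Algebra.smul_def, mul_left_comm]

lemma expSeries_neg_one_div : expSeries F (fun n => -1 / (n : F)) = 1 - PowerSeries.X := by
  refine (eq_expSeries_of_derivative F ?_ (by simp)).symm
  have hgeom : (PowerSeries.mk fun n => ((n : F) + 1) * (-1 / ((n + 1 : ℕ) : F)))
      = -PowerSeries.mk 1 := by
    ext n
    have : (n : F) + 1 ≠ 0 := by exact_mod_cast n.succ_ne_zero
    simp only [PowerSeries.coeff_mk, map_neg, Pi.one_apply, Nat.cast_add, Nat.cast_one]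
    field_simp
  rw [hgeom, neg_mul, PowerSeries.mk_one_mul_one_sub_eq_one]
  simp

end ExpSeries


section Annihilation

variable (F : Type) [Field F]

/-- `pder n` bundled as a derivation. -/
def pderDerivation (n : ℕ) : Derivation F (Gam F) (Gam F) :=
  if h : Odd n then pderiv ⟨n, h⟩ else 0

variable {F}

lemma pderDerivation_apply (n : ℕ) (f : Gam F) : pderDerivation F n f = pder n f := by
  rw [pderDerivation, pder]
  split_ifs <;> rfl

lemma pder_X (n : ℕ) (v : OddIdx) : pder n (X v : Gam F) = if n = v then 1 else 0 := by
  rw [pder]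
  split_ifs with hn hnv hnv
  · obtain rfl : (⟨n, hn⟩ : OddIdx) = v := Subtype.ext hnv
    exact pderiv_X_self _
  · exact pderiv_X_of_ne fun h => hnv (congrArg Subtype.val h).symm
  · exact absurd (hnv ▸ v.2) hn
  · rfl

lemma pder_comm (m n : ℕ) (f : Gam F) : pder m (pder n f) = pder n (pder m f) := by
  have pder_pder_X (i j : ℕ) (v : OddIdx) : pder i (pder j (X v : Gam F)) = 0 := by
    rw [pder_X, ← pderDerivation_apply]
    split_ifs <;> simp
  have bracket_eq_zero : ⁅pderDerivation F m, pderDerivation F n⁆ = 0 :=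
    derivation_ext fun v => by
      rw [Derivation.commutator_apply]
      simp [pderDerivation_apply, pder_pder_X]
  have h := DFunLike.congr_fun bracket_eq_zero f
  rw [Derivation.commutator_apply] at h
  simpa only [pderDerivation_apply, Derivation.zero_apply, sub_eq_zero] using h

variable (F) in
/-- The commutative algebra of constant-coefficient differential operators on `Γ`. The
annihilation part of a vertex operator is an `expSeries` over this algebra. It is a type synonym
of a subalgebra of `Module.End F (Gam F)`, so that it can be given a `CommRing` structure. -/
def DiffOp : Type :=
  Algebra.adjoin F (Set.range fun n => (pderDerivation F n).toLinearMap)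

namespace DiffOp

instance : Ring (DiffOp F) :=
  inferInstanceAs (Ring (Algebra.adjoin F _))

instance : CommRing (DiffOp F) where
  mul_comm :=
    (Algebra.isMulCommutative_adjoin F <| by
      rintro _ ⟨m, rfl⟩ _ ⟨n, rfl⟩
      exact LinearMap.ext fun f => by
        simpa [pderDerivation_apply] using pder_comm m n f).is_comm.comm

instance : Algebra F (DiffOp F) :=
  inferInstanceAs (Algebra F (Algebra.adjoin F _))

instance : Module (DiffOp F) (Gam F) :=
  inferInstanceAs (Module (Algebra.adjoin F _) (Gam F))

instance : IsScalarTower F (DiffOp F) (Gam F) :=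
  ⟨fun _ _ _ => rfl⟩

instance : SMulCommClass (DiffOp F) F (Gam F) :=
  inferInstance

end DiffOp

variable (F) in
/-- `pder n` as an element of `DiffOp F`. -/
def pderOp (n : ℕ) : DiffOp F :=
  ⟨(pderDerivation F n).toLinearMap, Algebra.subset_adjoin ⟨n, rfl⟩⟩

lemma pderOp_smul (n : ℕ) (f : Gam F) : pderOp F n • f = pder n f :=
  pderDerivation_apply n f

lemma pderOp_eq_zero {n : ℕ} (hn : Even n) : pderOp F n = 0 :=
  Subtype.ext <| congrArg Derivation.toLinearMap <| dif_neg <| Nat.not_odd_iff_even.2 hn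

lemma prod_map_smul_pderOp_smul (d : ℕ → F) (s : Multiset ℕ) (f : Gam F) :
    (s.map fun n => d n • pderOp F n).prod • f = (s.map d).prod • Dmult s f := by
  rw [Dmult, ← Multiset.prod_map_toList, ← Multiset.prod_map_toList]
  induction s.toList with
  | nil => simp
  | cons n l ih =>
    rw [List.map_cons, List.prod_cons, mul_smul, ih, smul_comm, smul_assoc, pderOp_smul,
      List.map_cons, List.prod_cons, mul_smul, List.foldr_cons, smul_comm]

/-- `annih d k` as an element of `DiffOp F`. -/
def annihOp (d : ℕ → F) (k : ℕ) : DiffOp F :=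
  PowerSeries.coeff k (expSeries F fun n => d n • pderOp F n)

lemma annihOp_smul (d : ℕ → F) (k : ℕ) (f : Gam F) : annihOp d k • f = annih d k f := by
  rw [annih, annihOp, coeff_expSeries, sum_partitionParts, sum_smul]
  simp only [smul_assoc, prod_map_smul_pderOp_smul, div_eq_inv_mul, mul_smul]

lemma annih_sum {ι : Type*} (d : ℕ → F) (k : ℕ) (s : Finset ι) (f : ι → Gam F) :
    annih d k (∑ i ∈ s, f i) = ∑ i ∈ s, annih d k (f i) := by
  simp only [← annihOp_smul, smul_sum]

lemma annih_add (d : ℕ → F) (k : ℕ) (f g : Gam F) :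
    annih d k (f + g) = annih d k f + annih d k g := by
  simp only [← annihOp_smul, smul_add]

lemma annih_zero (d : ℕ → F) (f : Gam F) : annih d 0 f = f := by
  rw [← annihOp_smul, annihOp, PowerSeries.coeff_zero_eq_constantCoeff_apply,
    constantCoeff_expSeries, one_smul]

lemma annih_comm (d e : ℕ → F) (j k : ℕ) (f : Gam F) :
    annih d j (annih e k f) = annih e k (annih d j f) := by
  simp only [← annihOp_smul, smul_comm (annihOp d j)]

variable [CharZero F]

lemma succ_smul_annih_succ (d : ℕ → F) (k : ℕ) (f : Gam F) :
    ((k : F) + 1) • annih d (k + 1) f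
      = ∑ p ∈ antidiagonal k,
          (((p.1 : F) + 1) * d (p.1 + 1)) • annih d p.2 (pder (p.1 + 1) f) := by
  have h : ((k : F) + 1) • annihOp d (k + 1) = ∑ p ∈ antidiagonal k,
      (((p.1 : F) + 1) * d (p.1 + 1)) • (annihOp d p.2 * pderOp F (p.1 + 1)) := by
    have hsucc (i : ℕ) (L : DiffOp F) : ((i : F) + 1) • L = ((i : DiffOp F) + 1) * L := by
      rw [Algebra.smul_def, map_add, map_natCast, map_one]
    rw [hsucc, annihOp, succ_mul_coeff_expSeries]
    refine sum_congr rfl fun p _ => ?_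
    rw [mul_smul, hsucc, mul_assoc, smul_mul_assoc, mul_comm (pderOp F _), annihOp]
  simpa only [sum_smul, smul_assoc, mul_smul, annihOp_smul, pderOp_smul]
    using congrArg (· • f) h

lemma sum_annih_annih (d : ℕ → F) (k : ℕ) (f : Gam F) :
    ∑ p ∈ antidiagonal k, (-1 : F) ^ p.2 • annih d p.1 (annih d p.2 f)
      = if k = 0 then f else 0 := by
  have h := congrArg (· • f) (sum_expSeries_mul_expSeries F (x := fun n => d n • pderOp F n)
    (fun n hn => by rw [pderOp_eq_zero hn, smul_zero]) k)
  simpa only [sum_smul, ← annihOp.eq_1, smul_assoc, mul_smul, annihOp_smul, ite_smul, one_smul,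
    zero_smul] using h

end Annihilation


section Taylor

variable {F : Type} [Field F]

lemma pder_mul (n : ℕ) (f g : Gam F) : pder n (f * g) = pder n f * g + f * pder n g := by
  simp only [← pderDerivation_apply, Derivation.leibniz, smul_eq_mul]
  ring

lemma pder_C (n : ℕ) (a : F) : pder n (C a : Gam F) = 0 := by
  rw [← pderDerivation_apply, ← algebraMap_eq, Derivation.map_algebraMap]

lemma sum_antidiagonal_assoc {M : Type*} [AddCommMonoid M] (k : ℕ) (g : ℕ → ℕ → ℕ → M) :
    ∑ p ∈ antidiagonal k, ∑ q ∈ antidiagonal p.1, g q.1 q.2 p.2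
      = ∑ p ∈ antidiagonal k, ∑ q ∈ antidiagonal p.2, g p.1 q.1 q.2 := by
  rw [sum_sigma', sum_sigma']
  refine sum_nbij' (fun ⟨⟨_, c⟩, ⟨a, b⟩⟩ => ⟨(a, b + c), (b, c)⟩)
    (fun ⟨⟨a, _⟩, ⟨b, c⟩⟩ => ⟨(a + b, c), (a, b)⟩) ?_ ?_ ?_ ?_ ?_
  · simp +contextual [← add_assoc]
  · simp +contextual [add_assoc]
  all_goals simp +contextual

/-- The algebra homomorphism `pₙ ↦ pₙ + dₙ tⁿ`. By Taylor's formula it is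
`exp (∑ₙ dₙ tⁿ ∂/∂pₙ)`, i.e. `t` stands for `z⁻¹` in the annihilation part of a vertex operator. -/
def taylor (d : ℕ → F) : Gam F →ₐ[F] Polynomial (Gam F) :=
  aeval fun v => Polynomial.C (X v) + Polynomial.C (C (d v)) * Polynomial.X ^ (v : ℕ)

lemma taylor_X (d : ℕ → F) (v : OddIdx) : taylor d (X v)
    = Polynomial.C (X v) + Polynomial.C (C (d v)) * Polynomial.X ^ (v : ℕ) :=
  aeval_X _ _

lemma natDegree_taylor_le (d : ℕ → F) (f : Gam F) :
    (taylor d f).natDegree ≤ f.totalDegree * f.vars.sup fun v => (v : ℕ) := by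
  rw [taylor, aeval_def, eval₂_eq]
  refine Polynomial.natDegree_sum_le_of_forall_le _ _ fun s hs =>
    (Polynomial.natDegree_C_mul_le _ _).trans <| (Polynomial.natDegree_prod_le _ _).trans ?_
  have natDegree_factor_le (v : OddIdx) (hv : v ∈ s.support) :
      (Polynomial.C (X v : Gam F) + Polynomial.C (C (d v)) * Polynomial.X ^ (v : ℕ)).natDegree
        ≤ f.vars.sup fun v => (v : ℕ) := by
    refine le_trans ?_ (le_sup (f := fun v : OddIdx => (v : ℕ))
      ((mem_vars_iff_mem_support v).2 ⟨s, hs, hv⟩))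
    compute_degree
  calc ∑ v ∈ s.support, Polynomial.natDegree
          ((Polynomial.C (X v : Gam F) + Polynomial.C (C (d v)) * Polynomial.X ^ (v : ℕ)) ^ s v)
      ≤ ∑ v ∈ s.support, s v * f.vars.sup fun v => (v : ℕ) :=
        sum_le_sum fun v hv => Polynomial.natDegree_pow_le_of_le (s v) (natDegree_factor_le v hv)
    _ ≤ f.totalDegree * f.vars.sup fun v => (v : ℕ) := by
        rw [← sum_mul]
        exact Nat.mul_le_mul_right _ (le_totalDegree hs)

variable [CharZero F]

lemma sum_smul_annih_pder_mul (d : ℕ → F) {k : ℕ} (f : Gam F) {g : Gam F}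
    (annih_mul_of_le : ∀ j ≤ k, ∀ f, annih d j (f * g)
      = ∑ p ∈ antidiagonal j, annih d p.1 f * annih d p.2 g) :
    ∑ p ∈ antidiagonal k, (((p.1 : F) + 1) * d (p.1 + 1)) • annih d p.2 (pder (p.1 + 1) f * g)
      = ∑ p ∈ antidiagonal (k + 1), (p.1 : F) • (annih d p.1 f * annih d p.2 g) := by
  rw [Finset.Nat.sum_antidiagonal_succ, Nat.cast_zero, zero_smul, zero_add]
  simp only [Nat.cast_add, Nat.cast_one, ← smul_mul_assoc, succ_smul_annih_succ, sum_mul]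
  rw [sum_antidiagonal_assoc k fun i j l =>
    (((i : F) + 1) * d (i + 1)) • annih d j (pder (i + 1) f) * annih d l g]
  refine sum_congr rfl fun p hp => ?_
  rw [annih_mul_of_le p.2 (HasAntidiagonal.antidiagonal.snd_le hp)]
  simp only [smul_sum, smul_mul_assoc]

lemma annih_mul (d : ℕ → F) (k : ℕ) (f g : Gam F) :
    annih d k (f * g) = ∑ p ∈ antidiagonal k, annih d p.1 f * annih d p.2 g := by
  induction k using Nat.strong_induction_on generalizing f g with
  | _ k ih =>
    obtain _ | k := k
    · simp [annih_zero]
    have differentiate_left (f g : Gam F) :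
        ∑ p ∈ antidiagonal k, (((p.1 : F) + 1) * d (p.1 + 1)) •
            annih d p.2 (pder (p.1 + 1) f * g)
          = ∑ p ∈ antidiagonal (k + 1), (p.1 : F) • (annih d p.1 f * annih d p.2 g) :=
      sum_smul_annih_pder_mul d f fun j hj f => ih j (Nat.lt_succ_of_le hj) f g
    have differentiate_right :
        ∑ p ∈ antidiagonal k, (((p.1 : F) + 1) * d (p.1 + 1)) •
            annih d p.2 (f * pder (p.1 + 1) g)
          = ∑ p ∈ antidiagonal (k + 1), (p.2 : F) • (annih d p.1 f * annih d p.2 g) := by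
      simp only [mul_comm f]
      rw [differentiate_left, ← Finset.Nat.sum_antidiagonal_swap]
      simp only [Prod.fst_swap, Prod.snd_swap, mul_comm]
    have hk : (k : F) + 1 ≠ 0 := by exact_mod_cast k.succ_ne_zero
    apply smul_right_injective _ hk
    calc ((k : F) + 1) • annih d (k + 1) (f * g)
        = ∑ p ∈ antidiagonal (k + 1), ((p.1 : F) + p.2) • (annih d p.1 f * annih d p.2 g) := by
          simp only [add_smul _ (_ : F) (_ * _), sum_add_distrib, ← differentiate_left,
            ← differentiate_right, succ_smul_annih_succ, pder_mul, annih_add, smul_add]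
      _ = ((k : F) + 1) • ∑ p ∈ antidiagonal (k + 1), annih d p.1 f * annih d p.2 g := by
          rw [smul_sum]
          refine sum_congr rfl fun p hp => ?_
          rw [← Nat.cast_add, HasAntidiagonal.mem_antidiagonal.1 hp, Nat.cast_add_one]

lemma annih_succ_C (d : ℕ → F) (k : ℕ) (a : F) : annih d (k + 1) (C a : Gam F) = 0 := by
  have hk : (k : F) + 1 ≠ 0 := by exact_mod_cast k.succ_ne_zero
  refine (smul_eq_zero_iff_right hk).1 ?_
  rw [succ_smul_annih_succ]
  refine sum_eq_zero fun p _ => ?_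
  rw [pder_C, ← annihOp_smul, smul_zero, smul_zero]

lemma annih_succ_X (d : ℕ → F) (k : ℕ) (v : OddIdx) :
    annih d (k + 1) (X v : Gam F) = if k + 1 = v then C (d v) else 0 := by
  have hk : (k : F) + 1 ≠ 0 := by exact_mod_cast k.succ_ne_zero
  apply smul_right_injective _ hk
  change ((k : F) + 1) • _ = _
  rw [succ_smul_annih_succ, sum_eq_single (k, 0)]
  · rw [annih_zero, pder_X]
    split_ifs with hv
    · simp [MvPolynomial.smul_eq_C_mul, hv]
    · simp
  · rintro ⟨i, _ | j⟩ hij hne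
    · simp only [HasAntidiagonal.mem_antidiagonal, add_zero] at hij
      exact absurd (by rw [hij]) hne
    · have h : pder (i + 1) (X v : Gam F) = C (if i + 1 = v then 1 else 0) := by
        rw [pder_X]
        split_ifs <;> simp
      rw [h, annih_succ_C, smul_zero]
  · simp

lemma coeff_taylor (d : ℕ → F) (k : ℕ) (f : Gam F) : (taylor d f).coeff k = annih d k f := by
  induction f using MvPolynomial.induction_on generalizing k with
  | C a =>
    cases k with
    | zero => simp [annih_zero, taylor, algebraMap_eq]
    | succ k => simp [annih_succ_C, taylor, algebraMap_eq]
  | add f g hf hg => rw [map_add, Polynomial.coeff_add, hf, hg, annih_add]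
  | mul_X f v hf =>
    have hX (j : ℕ) : (taylor d (X v)).coeff j = annih d j (X v) := by
      rw [taylor_X]
      cases j with
      | zero => simp [annih_zero, v.2.pos.ne]
      | succ j => simp [annih_succ_X, Polynomial.coeff_X_pow]
    simp only [map_mul, Polynomial.coeff_mul, annih_mul, hf, hX]

lemma annih_eq_zero_of_bnd_le (d : ℕ → F) {k : ℕ} {f : Gam F} (h : bnd f ≤ k) :
    annih d k f = 0 := by
  rw [← coeff_taylor]
  refine Polynomial.coeff_eq_zero_of_natDegree_lt ((natDegree_taylor_le d f).trans_lt ?_)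
  rw [bnd] at h
  nlinarith

end Taylor


section Creation

variable {F : Type} [Field F]

/-- The generating series of the creation components, `exp (∑ₙ cₙ pₙ zⁿ)`. -/
def creaSeries (c : ℕ → F) : PowerSeries (Gam F) :=
  expSeries F fun n => c n • pvar F n

lemma pvar_eq_zero {n : ℕ} (hn : Even n) : pvar F n = 0 :=
  dif_neg <| Nat.not_odd_iff_even.2 hn

lemma crea_of_neg (c : ℕ → F) {m : ℤ} (hm : m < 0) : crea c m = 0 :=
  if_neg hm.not_ge

lemma crea_natCast (c : ℕ → F) (k : ℕ) : crea c k = PowerSeries.coeff k (creaSeries c) := by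
  have prod_map_smul_pvar (s : Multiset ℕ) :
      (s.map fun n => c n • pvar F n).prod = (s.map c).prod • pprod F s := by
    induction s using Multiset.induction_on with
    | empty => simp [pprod]
    | cons n s ih => simp [pprod, ih, mul_comm (c n), mul_smul]
  rw [crea, if_pos (Int.natCast_nonneg k), Int.toNat_natCast, creaSeries, coeff_expSeries,
    sum_partitionParts]
  simp only [prod_map_smul_pvar, smul_smul, div_eq_inv_mul]

/-- The power series `exp (∑_{n odd} cₙ dₙ tⁿ)`, where `t = w/z`: the scalar produced by moving the
annihilation part `exp (∑ₙ dₙ z⁻ⁿ ∂/∂pₙ)` to the right of the creation part `exp (∑ₙ cₙ pₙ wⁿ)`. -/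
def contractionSeries (c d : ℕ → F) : PowerSeries F :=
  expSeries F fun n => if Odd n then c n * d n else 0

variable [CharZero F]

lemma sum_crea_mul_crea (c : ℕ → F) (k : ℕ) :
    ∑ p ∈ antidiagonal k, (-1 : F) ^ p.2 • (crea c p.1 * crea c p.2) = if k = 0 then 1 else 0 := by
  simp only [crea_natCast]
  exact sum_expSeries_mul_expSeries F (fun n hn => by rw [pvar_eq_zero hn, smul_zero]) k

lemma map_taylor_creaSeries (c d : ℕ → F) :
    PowerSeries.map (taylor d : Gam F →+* Polynomial (Gam F)) (creaSeries c)
      = PowerSeries.map Polynomial.C (creaSeries c)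
        * PowerSeries.rescale Polynomial.X
          (PowerSeries.map (algebraMap F (Polynomial (Gam F))) (contractionSeries c d)) := by
  have taylor_smul_pvar : (taylor d ∘ fun n => c n • pvar F n)
      = (fun n => Polynomial.C (c n • pvar F n)) + fun n => Polynomial.X ^ n
        * algebraMap F (Polynomial (Gam F)) (if Odd n then c n * d n else 0) := by
    ext1 n
    by_cases hn : Odd n
    · simp only [pvar, Algebra.smul_def, algebraMap_eq, Function.comp_apply, hn, ↓reduceDIte,
        map_mul, algHom_C, Polynomial.algebraMap_apply, taylor_X, Pi.add_apply, ↓reduceIte]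
      ring
    · simp [pvar, hn]
  have map_C : PowerSeries.map Polynomial.C (creaSeries c)
      = expSeries F fun n => Polynomial.C (c n • pvar F n) :=
    map_expSeries F (Polynomial.CAlgHom (R := F) (A := Gam F)) _
  have map_algebraMap :
      PowerSeries.map (algebraMap F (Polynomial (Gam F))) (contractionSeries c d)
        = expSeries F fun n =>
            algebraMap F (Polynomial (Gam F)) (if Odd n then c n * d n else 0) :=
    map_expSeries F (Algebra.ofId F (Polynomial (Gam F))) _
  rw [map_C, map_algebraMap, rescale_expSeries, ← expSeries_add, ← taylor_smul_pvar]
  exact map_expSeries F (taylor d) _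

lemma annih_crea (c d : ℕ → F) (i : ℕ) (r : ℤ) :
    annih d i (crea c r)
      = PowerSeries.coeff i (contractionSeries c d) • crea c (r - i) := by
  rcases lt_or_ge r 0 with hr | hr
  · rw [crea_of_neg c hr, crea_of_neg c (by omega), smul_zero, ← annihOp_smul, smul_zero]
  lift r to ℕ using hr
  have h := congrArg (fun s => (PowerSeries.coeff r s).coeff i) (map_taylor_creaSeries c d)
  simp only [PowerSeries.coeff_map, ← crea_natCast, PowerSeries.coeff_mul,
    PowerSeries.coeff_rescale, RingHom.coe_coe, coeff_taylor] at h
  have coeff_term (p : ℕ × ℕ) :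
      (Polynomial.C (crea c p.1) * (Polynomial.X ^ p.2 * algebraMap F (Polynomial (Gam F))
        (PowerSeries.coeff p.2 (contractionSeries c d)))).coeff i
      = if i = p.2 then PowerSeries.coeff p.2 (contractionSeries c d) • crea c p.1 else 0 := by
    rw [Polynomial.algebraMap_apply, mul_comm (Polynomial.X ^ _), Polynomial.coeff_C_mul,
      Polynomial.coeff_C_mul_X_pow, algebraMap_eq, mul_ite, mul_zero, smul_eq_C_mul, mul_comm]
  rw [h, Polynomial.finsetSum_coeff, sum_congr rfl fun p _ => coeff_term p]
  rcases le_or_gt i r with hir | hir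
  · rw [sum_eq_single (r - i, i), if_pos rfl, Nat.cast_sub hir]
    · rintro ⟨j, k⟩ hjk hne
      refine if_neg fun hik => hne ?_
      have := HasAntidiagonal.mem_antidiagonal.1 hjk
      ext <;> dsimp only at * <;> omega
    · simp [hir]
  · rw [crea_of_neg c (by omega), smul_zero]
    refine sum_eq_zero fun p hp => if_neg ?_
    have := HasAntidiagonal.mem_antidiagonal.1 hp
    omega

end Creation


section Products

lemma sum_range_sum_antidiagonal {M : Type*} [AddCommMonoid M] {I N K : ℕ} {g : ℕ → ℕ → M}
    (hI : ∀ i j, I ≤ i → g i j = 0) (hN : ∀ i j, N ≤ j → g i j = 0) (hK : I + N ≤ K) :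
    ∑ k ∈ range K, ∑ p ∈ antidiagonal k, g p.1 p.2 = ∑ j ∈ range N, ∑ i ∈ range I, g i j := by
  rw [← sum_product_right', sum_sigma']
  symm
  refine sum_of_injOn (fun p => ⟨p.1 + p.2, p⟩) (fun p _ q _ h => ?_) (fun p hp => ?_)
    (fun x hx hx' => ?_) fun p _ => rfl
  · exact eq_of_heq (Sigma.mk.inj h).2
  · simp only [coe_product, coe_range, Set.mem_prod, Set.mem_Iio, mem_coe, mem_sigma, mem_range,
      HasAntidiagonal.mem_antidiagonal, and_true] at hp ⊢
    omega
  · obtain ⟨k, i, j⟩ := x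
    obtain ⟨-, rfl⟩ : k < K ∧ i + j = k := by simpa using hx
    rcases le_or_gt I i with hi | hi
    · exact hI i j hi
    refine hN i j (not_lt.1 fun hj => hx' ⟨(i, j), ?_, rfl⟩)
    simpa using ⟨hi, hj⟩

variable {F : Type} [Field F] [CharZero F]

lemma vop_eq_sum_range (c d : ℕ → F) (m : ℤ) {f : Gam F} {N : ℕ} (hN : bnd f ≤ N) :
    vop c d m f = ∑ k ∈ range N, crea c (m + k) * annih d k f :=
  sum_subset (range_mono hN) fun k _ hk => by
    rw [annih_eq_zero_of_bnd_le d (not_lt.1 (mt mem_range.2 hk)), mul_zero]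

lemma vop_sum {ι : Type*} (c d : ℕ → F) (m : ℤ) (s : Finset ι) (f : ι → Gam F) :
    vop c d m (∑ i ∈ s, f i) = ∑ i ∈ s, vop c d m (f i) := by
  obtain ⟨N, hsum, hf⟩ : ∃ N, bnd (∑ i ∈ s, f i) ≤ N ∧ ∀ i ∈ s, bnd (f i) ≤ N :=
    ⟨_, le_max_left _ (s.sup fun i => bnd (f i)), fun i hi =>
      (le_sup (f := fun i => bnd (f i)) hi).trans (le_max_right _ _)⟩
  rw [vop_eq_sum_range c d m hsum,
    sum_congr rfl fun i hi => vop_eq_sum_range c d m (hf i hi), sum_comm]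
  simp only [annih_sum, mul_sum]

lemma vop_crea_mul (c d : ℕ → F) (m : ℤ) {r : ℤ} {g : Gam F} {I N : ℕ} (hI : r < I)
    (hN : ∀ j, N ≤ j → annih d j g = 0) :
    vop c d m (crea c r * g) = ∑ j ∈ range N, (∑ i ∈ range I,
      PowerSeries.coeff i (contractionSeries c d) • (crea c (m + j + i) * crea c (r - i)))
        * annih d j g := by
  rw [vop_eq_sum_range c d m (le_max_left (bnd (crea c r * g)) (I + N))]
  simp only [sum_mul]
  rw [← sum_range_sum_antidiagonal (K := max (bnd (crea c r * g)) (I + N)) ?_ ?_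
    (le_max_right _ _)]
  · refine sum_congr rfl fun k _ => ?_
    rw [annih_mul, mul_sum]
    refine sum_congr rfl fun p hp => ?_
    have hk : m + p.2 + p.1 = m + k := by
      have := HasAntidiagonal.mem_antidiagonal.1 hp
      omega
    rw [annih_crea, hk, smul_mul_assoc, smul_mul_assoc, mul_smul_comm, mul_assoc]
  · intro i j hi
    rw [crea_of_neg c (by omega : r - i < 0), mul_zero, smul_zero, zero_mul]
  · intro i j hj
    rw [hN j hj, mul_zero]

lemma vop_vop (c d : ℕ → F) (m n : ℤ) {f : Gam F} {I N : ℕ} (hN : bnd f ≤ N) (hI : n + N ≤ I) :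
    vop c d m (vop c d n f) = ∑ l ∈ range N, ∑ j ∈ range N, (∑ i ∈ range I,
      PowerSeries.coeff i (contractionSeries c d) • (crea c (m + j + i) * crea c (n + l - i)))
        * annih d j (annih d l f) := by
  rw [vop_eq_sum_range c d n hN, vop_sum]
  refine sum_congr rfl fun l hl => vop_crea_mul c d m ?_ fun j hj => ?_
  · have := mem_range.1 hl
    omega
  · rw [annih_comm, annih_eq_zero_of_bnd_le d (hN.trans hj), ← annihOp_smul, smul_zero]

end Products

section Bracket

variable {F : Type} [Field F] [CharZero F]

lemma contractionSeries_cQ_dQ_mul :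
    contractionSeries (cQ F) (dQ F) * (1 + PowerSeries.X) = 1 - PowerSeries.X := by
  have rescale_one_sub_X :
      1 + PowerSeries.X = expSeries F fun n => (-1 : F) ^ n * (-1 / (n : F)) := by
    rw [← rescale_expSeries, expSeries_neg_one_div]
    simp
  rw [rescale_one_sub_X, contractionSeries, ← expSeries_add, ← expSeries_neg_one_div F]
  congr 1
  ext n
  rcases n.even_or_odd with hn | hn
  · simp [Nat.not_odd_iff_even.2 hn, hn.neg_one_pow]
  · simp only [cQ, dQ, Pi.add_apply, hn, ↓reduceIte, hn.neg_one_pow]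
    ring

lemma coeff_contractionSeries_cQ_dQ (i : ℕ) :
    PowerSeries.coeff i (contractionSeries (cQ F) (dQ F))
      = if i = 0 then 1 else 2 * (-1) ^ i := by
  have h (k : ℕ) := congrArg (PowerSeries.coeff (k + 1)) (contractionSeries_cQ_dQ_mul (F := F))
  simp only [mul_add, mul_one, map_add, map_sub, PowerSeries.coeff_succ_mul_X] at h
  induction i with
  | zero => simp [contractionSeries, constantCoeff_expSeries]
  | succ k ih =>
    rw [eq_sub_of_add_eq (h k), ih]
    cases k with
    | zero => norm_num [PowerSeries.coeff_one]
    | succ k => simp [PowerSeries.coeff_one, PowerSeries.coeff_X, pow_succ]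

lemma sum_contraction_smul_add_neg {M : Type*} [AddCommGroup M] [Module F M] (h : ℤ → M) (I : ℕ) :
    ∑ i ∈ range (I + 1), PowerSeries.coeff i (contractionSeries (cQ F) (dQ F)) • h i
        + ∑ i ∈ range (I + 1), PowerSeries.coeff i (contractionSeries (cQ F) (dQ F)) • h (-i)
      = (2 : F) • ∑ i ∈ Icc (-I : ℤ) I, (-1 : F) ^ i • h i := by
  induction I with
  | zero => simp [contractionSeries, constantCoeff_expSeries, two_smul]
  | succ I ih =>
    have Icc_succ : Icc (-(I + 1 : ℕ) : ℤ) (I + 1 : ℕ)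
        = insert (-(I + 1 : ℕ) : ℤ) (insert ((I + 1 : ℕ) : ℤ) (Icc (-I : ℤ) I)) := by
      ext i
      simp only [mem_Icc, mem_insert]
      omega
    rw [Icc_succ, sum_insert (by simp only [mem_Icc, mem_insert]; omega),
      sum_insert (by simp only [mem_Icc]; omega), smul_add, smul_add, ← ih, sum_range_succ,
      sum_range_succ _ (I + 1), coeff_contractionSeries_cQ_dQ, if_neg I.succ_ne_zero,
      zpow_neg, zpow_natCast, ← inv_pow, inv_neg_one, smul_smul, smul_smul]
    abel

lemma sum_neg_one_zpow_smul_crea_mul_crea (c : ℕ → F) {a b : ℤ} {I : ℕ} (ha : a ≤ I)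
    (hb : b ≤ I) :
    ∑ i ∈ Icc (-I : ℤ) I, (-1 : F) ^ i • (crea c (a + i) * crea c (b - i))
      = if a + b = 0 then (-1 : F) ^ b • 1 else 0 := by
  have crea_mul_eq_zero {i : ℤ} (hi : ¬(-a ≤ i ∧ i ≤ b)) :
      crea c (a + i) * crea c (b - i) = 0 := by
    rcases not_and_or.1 hi with hi | hi
    · rw [crea_of_neg c (by omega), zero_mul]
    · rw [crea_of_neg c (by omega : b - i < 0), mul_zero]
  rcases lt_or_ge (a + b) 0 with hab | hab
  · rw [if_neg hab.ne]
    exact sum_eq_zero fun i _ => by rw [crea_mul_eq_zero (by omega), smul_zero]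
  obtain ⟨k, hk⟩ := Int.eq_ofNat_of_zero_le hab
  calc ∑ i ∈ Icc (-I : ℤ) I, (-1 : F) ^ i • (crea c (a + i) * crea c (b - i))
      = ∑ p ∈ antidiagonal k, (-1 : F) ^ (b - p.2) • (crea c p.1 * crea c p.2) := by
        symm
        refine sum_of_injOn (fun p => b - p.2) (fun p hp q hq h => ?_) (fun p hp => ?_)
          (fun i _ hi => ?_) fun p hp => ?_
        · simp only [mem_coe, HasAntidiagonal.mem_antidiagonal] at hp hq
          ext <;> dsimp only at h <;> omega
        · simp only [coe_Icc, Set.mem_Icc, mem_coe, HasAntidiagonal.mem_antidiagonal] at hp ⊢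
          omega
        · refine smul_eq_zero_of_right _ (crea_mul_eq_zero fun h => hi ?_)
          refine ⟨((a + i).toNat, (b - i).toNat), ?_, ?_⟩
          · simp only [mem_coe, HasAntidiagonal.mem_antidiagonal]
            omega
          · dsimp only
            omega
        · have h : a + (b - p.2) = p.1 := by
            have := HasAntidiagonal.mem_antidiagonal.1 hp
            omega
          rw [h, sub_sub_cancel]
    _ = (-1 : F) ^ b • ∑ p ∈ antidiagonal k, (-1 : F) ^ p.2 • (crea c p.1 * crea c p.2) := by
        rw [smul_sum]
        refine sum_congr rfl fun p _ => ?_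
        rw [smul_smul, zpow_sub₀ (by simp), zpow_natCast, div_eq_mul_inv, ← inv_pow, inv_neg_one]
    _ = if a + b = 0 then (-1 : F) ^ b • 1 else 0 := by
        rw [sum_crea_mul_crea, hk, smul_ite, smul_zero]
        norm_cast

lemma sum_contraction_smul_crea_mul_crea {a b : ℤ} {I : ℕ} (ha : a ≤ I) (hb : b ≤ I) :
    ∑ i ∈ range (I + 1), PowerSeries.coeff i (contractionSeries (cQ F) (dQ F))
          • (crea (cQ F) (a + i) * crea (cQ F) (b - i))
        + ∑ i ∈ range (I + 1), PowerSeries.coeff i (contractionSeries (cQ F) (dQ F))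
          • (crea (cQ F) (b + i) * crea (cQ F) (a - i))
      = if a + b = 0 then (2 * (-1 : F) ^ b) • 1 else 0 := by
  have h := sum_contraction_smul_add_neg (F := F)
    (fun i => crea (cQ F) (a + i) * crea (cQ F) (b - i)) I
  rw [sum_neg_one_zpow_smul_crea_mul_crea _ ha hb, smul_ite, smul_smul, smul_zero] at h
  simpa only [sub_neg_eq_add, ← sub_eq_add_neg, mul_comm (crea _ (a - _))] using h

lemma sum_sum_annih_annih (d : ℕ → F) {m n : ℤ} {f : Gam F} {N : ℕ} (hN : -(m + n) < N) :
    ∑ l ∈ range N, ∑ j ∈ range N,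
        (if m + j + (n + l) = 0 then (-1 : F) ^ l • annih d j (annih d l f) else 0)
      = if m = -n then f else 0 := by
  rcases lt_or_ge 0 (m + n) with hmn | hmn
  · rw [if_neg (by omega)]
    exact sum_eq_zero fun l _ => sum_eq_zero fun j _ => if_neg (by omega)
  obtain ⟨k, hk⟩ := Int.eq_ofNat_of_zero_le (neg_nonneg.2 hmn)
  have filter_eq_antidiagonal :
      (range N ×ˢ range N).filter (fun p => m + p.1 + (n + p.2) = 0) = antidiagonal k := by
    ext p
    simp only [mem_filter, mem_product, mem_range, HasAntidiagonal.mem_antidiagonal]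
    omega
  have hk0 : k = 0 ↔ m = -n := by omega
  rw [← sum_product_right', ← sum_filter, filter_eq_antidiagonal, sum_annih_annih]
  simp only [hk0]

lemma Qop_Qop_add_Qop_Qop (m n : ℤ) {f : Gam F} {N : ℕ} (hN : bnd f ≤ N) :
    Qop m (Qop n f) + Qop n (Qop m f) = ∑ l ∈ range N, ∑ j ∈ range N,
      (if m + j + (n + l) = 0 then (2 * (-1 : F) ^ (n + l)) • 1 else 0)
        * annih (dQ F) j (annih (dQ F) l f) := by
  obtain ⟨I, hm, hn⟩ : ∃ I : ℕ, m + N ≤ I ∧ n + N ≤ I :=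
    ⟨m.toNat + n.toNat + N, by omega, by omega⟩
  simp only [Qop]
  rw [vop_vop _ _ m n hN (I := I + 1) (by omega), vop_vop _ _ n m hN (I := I + 1) (by omega),
    add_comm, sum_comm, add_comm]
  simp only [← sum_add_distrib]
  refine sum_congr rfl fun l hl => sum_congr rfl fun j hj => ?_
  rw [annih_comm _ _ l j, ← add_mul, sum_contraction_smul_crea_mul_crea]
  · have := mem_range.1 hj
    omega
  · have := mem_range.1 hl
    omega

end Bracket

theorem clifford_relations_general {F : Type} [Field F] [CharZero F] (m n : ℤ) (f : Gam F) :
    Qop m (Qop n f) + Qop n (Qop m f) = if m = -n then ((-1 : F) ^ n * 2) • f else 0 := by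
  obtain ⟨N, hf, hmn⟩ : ∃ N : ℕ, bnd f ≤ N ∧ -(m + n) < N :=
    ⟨bnd f + (-(m + n)).toNat + 1, by omega, by omega⟩
  calc Qop m (Qop n f) + Qop n (Qop m f)
      = ∑ l ∈ range N, ∑ j ∈ range N,
          (if m + j + (n + l) = 0 then (2 * (-1 : F) ^ (n + l)) • 1 else 0)
            * annih (dQ F) j (annih (dQ F) l f) := Qop_Qop_add_Qop_Qop m n hf
    _ = ((-1 : F) ^ n * 2) • ∑ l ∈ range N, ∑ j ∈ range N,
          if m + j + (n + l) = 0 then (-1 : F) ^ l • annih (dQ F) j (annih (dQ F) l f) else 0 := by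
        have h_sign (l : ℕ) : 2 * (-1 : F) ^ (n + l) = (-1) ^ n * 2 * (-1) ^ l := by
          rw [zpow_add₀ (by simp), zpow_natCast]
          ring
        simp only [smul_sum, ite_mul, zero_mul, smul_mul_assoc, one_mul, smul_ite, smul_zero,
          smul_smul, h_sign]
    _ = if m = -n then ((-1 : F) ^ n * 2) • f else 0 := by
        rw [sum_sum_annih_annih _ hmn, smul_ite, smul_zero]

theorem clifford_relations (m n : ℤ) (f : Gam ℚ) :
    Qop m (Qop n f) + Qop n (Qop m f)
      = if m = -n then (((-1 : ℚ) ^ n * 2) • f) else 0 := by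
  exact clifford_relations_general m n f

end
end

section
/- On the ring Γ with vertex operators G(z) = exp(∑_{n≥1 odd} (2/n) p_n z^n) exp(∑_{n≥1 odd} (t^n−1)(∂/∂p_n) z^{-n}) = ∑_{n∈ℤ} G_n z^n, the components satisfy the quadratic relations (1−t²)(G_m G_n + G_n G_m) + t(G_{m−1}G_{n+1} − G_{n+1}G_{m−1} + G_{n−1}G_{m+1} − G_{m+1}G_{n−1}) = 2(−1)^n (1−t)² δ_{m,−n} for all integers m, n. -/
open MvPolynomial Finset

noncomputable section
open scoped Classical

/-- The coefficient field ℚ(t). -/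
abbrev FF := RatFunc ℚ

instance : CharZero FF :=
  charZero_of_injective_algebraMap (RatFunc.algebraMap_injective ℚ)

/-- The parameter t. -/
def tt : FF := RatFunc.X

/-- Annihilation coefficients d_n = tⁿ - 1 (n odd) of G(z). -/
def dG : ℕ → FF := fun n => if Odd n then tt ^ n - 1 else 0

/-- Creation coefficients 2(tⁿ-1)/n (n odd) of G*(z). -/
def cGs : ℕ → FF := fun n => if Odd n then 2 * (tt ^ n - 1) / (n : FF) else 0

/-- Annihilation coefficients d_n = 1 (n odd) of G*(z). -/
def dGs : ℕ → FF := fun n => if Odd n then (1 : FF) else 0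

/-- The component G_m of G(z) = exp(∑(2/n)pₙzⁿ)exp(∑(tⁿ-1)(∂/∂pₙ)z^{-n}). -/
def Gop (m : ℤ) (f : Gam FF) : Gam FF := vop (cQ FF) dG m f

/-- The component G*_m (coefficient of z^{-m}) of
  G*(z) = exp(∑(2(tⁿ-1)/n)pₙzⁿ)exp(∑(∂/∂pₙ)z^{-n}). -/
def Gstar (m : ℤ) (f : Gam FF) : Gam FF := vop cGs dGs (-m) f

/-- G_λ·1 for a list of nonnegative parts. -/
def Gelem (l : List ℕ) : Gam FF := l.foldr (fun a g => Gop (a : ℤ) g) 1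

/-- G_λ·1 for a list of integer indices. -/
def GelemZ (l : List ℤ) : Gam FF := l.foldr (fun a g => Gop a g) 1

/-- The Q-Kostka polynomial L_{λμ}(t) = 2^{-ℓ(λ)}⟨G_μ·1, Q_λ·1⟩. -/
def Lpoly (l m : List ℕ) : FF := formQ (Gelem m) (Qelem FF l) / 2 ^ l.length

/-- The spin Green polynomial Y^λ_μ(t) = ⟨G_λ(x;t), p_μ⟩. -/
def Ypoly (l : List ℕ) (M : Multiset ℕ) : FF := formQ (Gelem l) (pprod FF M)

/-- z_ρ(t) = z_ρ ∏ⱼ (1 - t^{ρⱼ})⁻¹. -/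
def zpt (ρ : Multiset ℕ) : FF := (zp ρ : FF) / (ρ.map fun j => 1 - tt ^ j).prod

/-- The adjoint power sum operator p*_m = (m/2) ∂/∂p_m. -/
def pstar (m : ℕ) (f : Gam FF) : Gam FF := ((m : FF) / 2) • pder m f

/-- n(λ) = ∑ᵢ (i-1)λᵢ. -/
def nstat (l : List ℕ) : ℕ := ∑ i ∈ Finset.range l.length, i * l.getD i 0

/-- Dominance order on partitions (as decreasing lists), including equal weights. -/
def domin (a b : List ℕ) : Prop := a.sum = b.sum ∧ ∀ i, (b.take i).sum ≤ (a.take i).sum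

/-- The parts of a `Nat.Partition` as a decreasingly sorted list. -/
def listOf {n : ℕ} (ρ : n.Partition) : List ℕ := (ρ.parts.sort (· ≤ ·)).reverse

/-- The i-th part (1-indexed by position in list, 0 beyond the length). -/
def pt (l : List ℕ) (i : ℕ) : ℕ := l.getD i 0

/-- ξ/ν is a horizontal strip: ν ⊆ ξ and ξ_{i+1} ≤ ν_i for all i. -/
def HStrip (ξ ν : List ℕ) : Prop := ∀ i, pt ν i ≤ pt ξ i ∧ pt ξ (i + 1) ≤ pt ν i

/-- The strip ξ/ν has a box in column c. -/
def boxcol (ξ ν : List ℕ) (c : ℕ) : Prop := ∃ i < ξ.length, pt ν i < c ∧ c ≤ pt ξ i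

/-- a(ξ/ν): number of columns with a box of ξ/ν but none in the next column. -/
def acount (ξ ν : List ℕ) : ℕ :=
  ((Finset.Icc 1 (pt ξ 0)).filter fun c => boxcol ξ ν c ∧ ¬ boxcol ξ ν (c + 1)).card

end

/-!
A family of operators `A m n` on `Γ` whose brackets with every `∂/∂p_i` and with every
multiplication by `p_i` are combinations of its members is determined by its vacuum expectations,
the constant terms of `A m n 1`: the span of the vectors `A m n 1` is stable under all `∂/∂p_i`, and
`Γ` is generated from `1` by the multiplications. For `i` odd, `G_m` has brackets
`[∂/∂p_i, G_m] = c_i G_{m-i}` and `[p_i, G_m] = -d_i G_{m+i}`, so that both sides of the quadratic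
relations change by the same rule, and the relations need only be checked on vacuum expectations.
The constant term of `G_m G_n 1` is `δ_{m,-n}` times the coefficient of `w^n` in
`exp (∑ 2 (tⁱ - 1) wⁱ / i) = (1 - w) (1 + t w) / ((1 + w) (1 - t w))`, the sum being over odd `i`.
-/

noncomputable section

namespace QuadraticRelations

attribute [local instance] LieRing.ofAssociativeRing

section PartitionSum

lemma aut_cons (j : ℕ) (ρ : Multiset ℕ) : aut (j ::ₘ ρ) = (ρ.count j + 1) * aut ρ := by
  have aut_eq : ∀ s : Multiset ℕ, s.toFinset ⊆ insert j ρ.toFinset →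
      aut s = (s.count j).factorial * ∏ i ∈ ρ.toFinset.erase j, (s.count i).factorial := by
    intro s hs
    rw [aut, prod_subset hs fun i _ hi => by simp_all, ← mul_prod_erase _ _ (mem_insert_self j _),
      erase_insert_eq_erase]
  rw [aut_eq _ (by simp), aut_eq ρ (subset_insert _ _), Multiset.count_cons_self,
    Nat.factorial_succ, mul_assoc]
  congr 2
  exact prod_congr rfl fun i hi => by rw [Multiset.count_cons_of_ne (ne_of_mem_erase hi)]

lemma aut_ne_zero (ρ : Multiset ℕ) : aut ρ ≠ 0 :=
  prod_ne_zero_iff.2 fun _ _ => Nat.factorial_ne_zero _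

variable {K : Type*} [Field K] {M : Type*} [AddCommGroup M] [Module K M]

variable (K) in
/-- The weighted sum `∑ g(ρ) / ∏ᵢ mᵢ(ρ)!` over the partitions `ρ` of the integer `m`, which is `0`
when `m` is negative. -/
def partitionSum (g : Multiset ℕ → M) (m : ℤ) : M :=
  if 0 ≤ m then ∑ ρ : m.toNat.Partition, (aut ρ.parts : K)⁻¹ • g ρ.parts else 0

lemma partitionSum_natCast (g : Multiset ℕ → M) (n : ℕ) :
    partitionSum K g n = ∑ ρ : n.Partition, (aut ρ.parts : K)⁻¹ • g ρ.parts :=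
  if_pos n.cast_nonneg

lemma partitionSum_of_neg (g : Multiset ℕ → M) {m : ℤ} (hm : m < 0) : partitionSum K g m = 0 :=
  if_neg hm.not_ge

lemma partitionSum_zero (g : Multiset ℕ → M) : partitionSum K g 0 = g 0 := by
  simpa [aut] using partitionSum_natCast (K := K) g 0

lemma partitionSum_congr {g h : Multiset ℕ → M} {m : ℤ}
    (H : ∀ s : Multiset ℕ, (s.sum : ℤ) = m → g s = h s) :
    partitionSum K g m = partitionSum K h m := by
  rcases lt_or_ge m 0 with hm | hm
  · simp only [partitionSum_of_neg _ hm]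
  · lift m to ℕ using hm
    simp only [partitionSum_natCast]
    exact sum_congr rfl fun ρ _ => by rw [H _ (by exact_mod_cast ρ.parts_sum)]

lemma map_partitionSum {N : Type*} [AddCommGroup N] [Module K N] (φ : M →ₗ[K] N)
    (g : Multiset ℕ → M) (m : ℤ) :
    φ (partitionSum K g m) = partitionSum K (fun ρ => φ (g ρ)) m := by
  unfold partitionSum
  split <;> simp

lemma partitionSum_smul (a : K) (g : Multiset ℕ → M) (m : ℤ) :
    partitionSum K (fun ρ => a • g ρ) m = a • partitionSum K g m := by
  unfold partitionSum
  split <;> simp [smul_sum, smul_comm a]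

lemma partitionSum_finset_sum {ι : Type*} (s : Finset ι) (g : ι → Multiset ℕ → M) (m : ℤ) :
    partitionSum K (fun ρ => ∑ i ∈ s, g i ρ) m = ∑ i ∈ s, partitionSum K (g i) m := by
  unfold partitionSum
  split
  · simp only [smul_sum, sum_comm (s := s)]
  · simp

lemma inv_aut_cons_mul_count [CharZero K] (j : ℕ) (ρ : Multiset ℕ) :
    (aut (j ::ₘ ρ) : K)⁻¹ * (j ::ₘ ρ).count j = (aut ρ : K)⁻¹ := by
  have h₁ : (aut ρ : K) ≠ 0 := mod_cast aut_ne_zero ρ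
  have h₂ : (ρ.count j + 1 : K) ≠ 0 := Nat.cast_add_one_ne_zero _
  rw [aut_cons, Multiset.count_cons_self]
  push_cast
  field_simp

/-- Removing one part `j` is a bijection from the partitions of `m` having such a part onto the
partitions of `m - j`; the factor `count j` accounts for the change of the weight. -/
lemma partitionSum_count_smul_erase [CharZero K] {j : ℕ} (hj : 0 < j) (g : Multiset ℕ → M)
    (m : ℤ) :
    partitionSum K (fun ρ => (ρ.count j : K) • g (ρ.erase j)) m = partitionSum K g (m - j) := by
  have vanish : ∀ {n : ℕ} (ρ : n.Partition), j ∉ ρ.parts →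
      (aut ρ.parts : K)⁻¹ • (ρ.parts.count j : K) • g (ρ.parts.erase j) = 0 := fun ρ hρ => by
    rw [Multiset.count_eq_zero_of_notMem hρ, Nat.cast_zero, zero_smul, smul_zero]
  rcases lt_or_ge m j with hm | hm
  · rw [partitionSum_of_neg _ (sub_neg.2 hm)]
    rcases lt_or_ge m 0 with hm₀ | hm₀
    · exact partitionSum_of_neg _ hm₀
    · lift m to ℕ using hm₀
      rw [partitionSum_natCast]
      refine sum_eq_zero fun ρ _ => vanish ρ fun hρ => ?_
      exact (Nat.cast_lt.1 hm).not_ge (ρ.le_of_mem_parts hρ)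
  · obtain ⟨n, rfl⟩ : ∃ n : ℕ, m = n := ⟨m.toNat, by omega⟩
    rw [Nat.cast_le] at hm
    rw [← Nat.cast_sub hm, partitionSum_natCast, partitionSum_natCast,
      ← Fintype.sum_subtype_add_sum_subtype (fun ρ : n.Partition => j ∈ ρ.parts),
      Fintype.sum_eq_zero _ fun ρ : {ρ : n.Partition // j ∉ ρ.parts} => vanish ρ.1 ρ.2, add_zero,
      ← (Nat.Partition.partitionWithPartEquiv hj hm).symm.sum_comp]
    refine sum_congr rfl fun ρ _ => ?_
    rw [Nat.Partition.partitionWithPartEquiv_symm_apply_parts, Multiset.erase_cons_head,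
      smul_smul, inv_aut_cons_mul_count]

end PartitionSum

section ExpCoeff

variable {K : Type*} [Field K] {R : Type*} [Ring R]

lemma prod_map_toList_cons {y : ℕ → R} (hy : ∀ i j, Commute (y i) (y j)) (j : ℕ)
    (s : Multiset ℕ) : ((j ::ₘ s).toList.map y).prod = y j * (s.toList.map y).prod := by
  have hperm : (j ::ₘ s).toList.Perm (j :: s.toList) := by
    simp [← Multiset.coe_eq_coe, ← Multiset.cons_coe]
  refine ((hperm.map y).prod_eq' ?_).trans (by simp)
  exact List.pairwise_map.2 (List.pairwise_of_forall fun i k => hy i k)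

lemma lie_mul_right (u v w : R) : ⁅u, v * w⁆ = ⁅u, v⁆ * w + v * ⁅u, w⁆ := by
  simp only [Ring.lie_def]
  noncomm_ring

variable [Algebra K R]

lemma list_prod_map_smul (c : ℕ → K) (y : ℕ → R) (l : List ℕ) :
    (l.map fun j => c j • y j).prod = (l.map c).prod • (l.map y).prod := by
  induction l with
  | nil => simp
  | cons j l ih => simp [ih, smul_smul, mul_comm (c j)]

lemma lie_prod_map_toList {y : ℕ → R} (hy : ∀ i j, Commute (y i) (y j)) {u : R} {i : ℕ} {a : K}
    (hu : ∀ j, ⁅u, y j⁆ = if j = i then algebraMap K R a else 0) (s : Multiset ℕ) :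
    ⁅u, (s.toList.map y).prod⁆ = a • (s.count i : K) • ((s.erase i).toList.map y).prod := by
  induction s using Multiset.induction with
  | empty => simp [Ring.lie_def]
  | cons j s ih =>
    rw [prod_map_toList_cons hy, lie_mul_right, ih, hu]
    rcases eq_or_ne j i with rfl | hj
    · rw [if_pos rfl, Multiset.count_cons_self, Multiset.erase_cons_head, ← Algebra.smul_def,
        Nat.cast_succ, add_smul, one_smul, smul_add, add_comm, mul_smul_comm, mul_smul_comm]
      by_cases hs : j ∈ s
      · rw [← prod_map_toList_cons hy, Multiset.cons_erase hs]
      · simp [Multiset.count_eq_zero_of_notMem hs]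
    · rw [if_neg hj, zero_mul, zero_add, Multiset.count_cons_of_ne hj.symm,
        Multiset.erase_cons_tail _ hj, prod_map_toList_cons hy, mul_smul_comm, mul_smul_comm]

variable (K) in
/-- The coefficient of `z ^ m` in `exp (∑ⱼ yⱼ zʲ)`, for a family of pairwise commuting elements
`y` of a `K`-algebra. The entry `y 0` never contributes, as parts of a partition are positive. -/
def expCoeff (y : ℕ → R) (m : ℤ) : R :=
  partitionSum K (fun ρ => (ρ.toList.map y).prod) m

lemma expCoeff_of_neg (y : ℕ → R) {m : ℤ} (hm : m < 0) : expCoeff K y m = 0 :=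
  partitionSum_of_neg _ hm

lemma expCoeff_zero (y : ℕ → R) : expCoeff K y 0 = 1 := by
  simp [expCoeff, partitionSum_zero]

lemma expCoeff_zero_left (m : ℤ) : expCoeff K (0 : ℕ → R) m = if m = 0 then 1 else 0 := by
  split_ifs with hm
  · rw [hm, expCoeff_zero]
  · have prod_eq_zero (s : Multiset ℕ) (hs : (s.sum : ℤ) = m) :
        (s.toList.map (0 : ℕ → R)).prod = 0 := by
      have hne : s.toList ≠ [] := fun h => hm (by simp [← hs, Multiset.toList_eq_nil.1 h])
      obtain ⟨j, l, h⟩ := List.exists_cons_of_ne_nil hne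
      simp [h]
    simpa [expCoeff, partitionSum] using partitionSum_congr prod_eq_zero

lemma expCoeff_smul (c : ℕ → K) (y : ℕ → R) (m : ℤ) : expCoeff K (fun j => c j • y j) m =
    partitionSum K (fun ρ => (ρ.map c).prod • (ρ.toList.map y).prod) m := by
  simp only [expCoeff, list_prod_map_smul, Multiset.prod_map_toList]

lemma map_expCoeff {S : Type*} [Ring S] [Algebra K S] (φ : R →ₐ[K] S) (y : ℕ → R) (m : ℤ) :
    φ (expCoeff K y m) = expCoeff K (fun j => φ (y j)) m := by
  simpa [expCoeff, map_list_prod, Function.comp_def] using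
    map_partitionSum φ.toLinearMap (fun ρ => (ρ.toList.map y).prod) m

lemma lie_expCoeff [CharZero K] {y : ℕ → R} (hy : ∀ i j, Commute (y i) (y j)) {u : R} {i : ℕ}
    (hi : 0 < i) {a : K} (hu : ∀ j, ⁅u, y j⁆ = if j = i then algebraMap K R a else 0) (m : ℤ) :
    ⁅u, expCoeff K y m⁆ = a • expCoeff K y (m - i) := by
  calc ⁅u, expCoeff K y m⁆
      = partitionSum K (fun ρ => ⁅u, (ρ.toList.map y).prod⁆) m :=
        map_partitionSum (LieAlgebra.ad K R u) _ m
    _ = partitionSum K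
          (fun ρ => (ρ.count i : K) • a • ((ρ.erase i).toList.map y).prod) m :=
        partitionSum_congr fun ρ _ => by rw [lie_prod_map_toList hy hu, smul_comm]
    _ = partitionSum K (fun ρ => a • (ρ.toList.map y).prod) (m - i) :=
        partitionSum_count_smul_erase hi (fun ρ => a • (ρ.toList.map y).prod) m
    _ = a • expCoeff K y (m - i) := partitionSum_smul a _ _

lemma lie_expCoeff_smul [CharZero K] {y : ℕ → R} (hy : ∀ i j, Commute (y i) (y j)) {u : R}
    {i : ℕ} (hi : 0 < i) {a : K} (hu : ∀ j, ⁅u, y j⁆ = if j = i then algebraMap K R a else 0)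
    (c : ℕ → K) (m : ℤ) :
    ⁅u, expCoeff K (fun j => c j • y j) m⁆ =
      (c i * a) • expCoeff K (fun j => c j • y j) (m - i) := by
  refine lie_expCoeff (fun j k => ((hy j k).smul_left _).smul_right _) hi (fun j => ?_) m
  rw [Ring.lie_def, mul_smul_comm, smul_mul_assoc, ← smul_sub, ← Ring.lie_def, hu]
  split_ifs with h
  · rw [h, map_mul, Algebra.smul_def]
  · rw [smul_zero]

variable {M : Type*} [AddCommGroup M] [Module K M]

lemma expCoeff_apply (y : ℕ → Module.End K M) (m : ℤ) (v : M) :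
    expCoeff K y m v = partitionSum K (fun ρ => (ρ.toList.map y).prod v) m :=
  map_partitionSum (LinearMap.applyₗ v) _ m

lemma expCoeff_apply_of_shift {y : ℕ → Module.End K M} {x : ℕ → K} {v : ℤ → M}
    (hv : ∀ j n, y j (v n) = x j • v (n - j)) (m n : ℤ) :
    expCoeff K y m (v n) = expCoeff K x m • v (n - m) := by
  have list_apply : ∀ l : List ℕ, (l.map y).prod (v n) = (l.map x).prod • v (n - l.sum) := by
    intro l
    induction l with
    | nil => simp
    | cons j l ih =>
      rw [List.map_cons, List.prod_cons, Module.End.mul_apply, ih, map_smul, hv, smul_smul,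
        List.map_cons, List.prod_cons, List.sum_cons, mul_comm, Nat.cast_add, sub_sub,
        add_comm (l.sum : ℤ)]
  calc expCoeff K y m (v n)
      = partitionSum K (fun ρ => (ρ.toList.map x).prod • v (n - m)) m := by
        rw [expCoeff_apply]
        exact partitionSum_congr fun ρ hρ => by rw [list_apply, Multiset.sum_toList, hρ]
    _ = expCoeff K x m • v (n - m) :=
        (map_partitionSum (LinearMap.toSpanSingleton K M (v (n - m))) _ m).symm

lemma expCoeff_apply_mem {y : ℕ → Module.End K M} {W : ℕ → Submodule K M}
    (hW : ∀ j k, ∀ v ∈ W k, y j v ∈ W (k + j)) {k : ℕ} {v : M} (hv : v ∈ W k) (n : ℕ) :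
    expCoeff K y n v ∈ W (k + n) := by
  have list_mem : ∀ l : List ℕ, (l.map y).prod v ∈ W (k + l.sum) := by
    intro l
    induction l with
    | nil => simpa using hv
    | cons j l ih => simpa [add_assoc, add_comm j] using hW j _ _ ih
  rw [expCoeff_apply, partitionSum_natCast]
  refine sum_mem fun ρ _ => (W _).smul_mem _ ?_
  simpa [ρ.parts_sum] using list_mem ρ.parts.toList

lemma partitionSum_count_mul_prod_map [CharZero K] (x : ℕ → K) {j : ℕ} (hj : 0 < j) (m : ℤ) :
    partitionSum K (fun ρ => ρ.count j * (ρ.map x).prod) m = x j * expCoeff K x (m - j) := by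
  calc partitionSum K (fun ρ => ρ.count j * (ρ.map x).prod) m
      = partitionSum K (fun ρ => (ρ.count j : K) • x j • ((ρ.erase j).map x).prod) m := by
        refine partitionSum_congr fun ρ _ => ?_
        by_cases hρ : j ∈ ρ
        · rw [smul_eq_mul, smul_eq_mul, Multiset.prod_map_erase hρ]
        · simp [Multiset.count_eq_zero_of_notMem hρ]
    _ = partitionSum K (fun ρ => x j • (ρ.map x).prod) (m - j) :=
        partitionSum_count_smul_erase hj (fun ρ => x j • (ρ.map x).prod) m
    _ = x j * expCoeff K x (m - j) := by
        rw [partitionSum_smul, smul_eq_mul, expCoeff]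
        simp only [Multiset.prod_map_toList]

lemma natCast_mul_expCoeff [CharZero K] (x : ℕ → K) (n : ℕ) :
    n * expCoeff K x n = ∑ p ∈ antidiagonal n, p.1 * x p.1 * expCoeff K x p.2 := by
  calc n * expCoeff K x n
      = partitionSum K (fun ρ => n * (ρ.map x).prod) n := by
        simpa [expCoeff] using
          (partitionSum_smul (n : K) (fun ρ => (ρ.map x).prod) (n : ℤ)).symm
    _ = partitionSum K
          (fun ρ => ∑ p ∈ antidiagonal n, (p.1 : K) • (ρ.count p.1 * (ρ.map x).prod)) n := by
        refine partitionSum_congr fun ρ hρ => ?_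
        have hρ' : ρ.sum = n := mod_cast hρ
        have hsub : ρ.toFinset ⊆ range (n + 1) := fun j hj => mem_range_succ_iff.2 <|
          hρ' ▸ Multiset.le_sum_of_mem (Multiset.mem_toFinset.1 hj)
        have hn : (n : K) = ∑ j ∈ range (n + 1), (ρ.count j : K) * j :=
          mod_cast hρ'.symm.trans (sum_multiset_count_of_subset ρ _ hsub)
        rw [hn, sum_mul, Nat.sum_antidiagonal_eq_sum_range_succ_mk]
        exact sum_congr rfl fun j _ => by simp only [smul_eq_mul]; ring
    _ = ∑ p ∈ antidiagonal n, p.1 * x p.1 * expCoeff K x p.2 := by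
        rw [partitionSum_finset_sum]
        refine sum_congr rfl fun p hp => ?_
        rw [partitionSum_smul, smul_eq_mul, mul_assoc]
        rcases p.1.eq_zero_or_pos with h | h
        · simp [h]
        · rw [partitionSum_count_mul_prod_map x h, ← mem_antidiagonal.1 hp]
          simp

end ExpCoeff

section NormalOrdered

variable {K : Type*} [CommRing K] {M : Type*} [AddCommGroup M] [Module K M]
  {C A : ℤ → Module.End K M}

lemma hasFiniteSupport_apply {A : ℤ → Module.End K M}
    (hA : ∀ v, (fun k => A k v).HasFiniteSupport) (B : ℤ → Module.End K M) (v : M) :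
    (fun k => B k (A k v)).HasFiniteSupport :=
  (hA v).subset fun k hk hAk => hk (by simp only [hAk, map_zero])

/-- The normally ordered product of two families of operators: the coefficient of `z ^ m` in
`C(z) A(z)`, where `C(z) = ∑ₖ C k zᵏ` and `A(z) = ∑ₖ A k z⁻ᵏ`. Local finiteness of `A` gives the
product a meaning. -/
def normalOrdered (C : ℤ → Module.End K M) {A : ℤ → Module.End K M}
    (hA : ∀ v, (fun k => A k v).HasFiniteSupport) (m : ℤ) : Module.End K M where
  toFun v := ∑ᶠ k, C (m + k) (A k v)
  map_add' v w := by
    simp only [map_add]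
    exact finsum_add_distrib (hasFiniteSupport_apply hA _ v) (hasFiniteSupport_apply hA _ w)
  map_smul' a v := by
    simp only [map_smul, RingHom.id_apply]
    exact (smul_finsum' a (hasFiniteSupport_apply hA _ v)).symm

variable (hA : ∀ v, (fun k => A k v).HasFiniteSupport)

lemma normalOrdered_apply (m : ℤ) (v : M) :
    normalOrdered C hA m v = ∑ᶠ k, C (m + k) (A k v) := rfl

lemma lie_normalOrdered {u : Module.End K M} {a b : K} {s : ℤ}
    (huC : ∀ m, ⁅u, C m⁆ = a • C (m + s)) (huA : ∀ k, ⁅u, A k⁆ = b • A (k - s)) (m : ℤ) :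
    ⁅u, normalOrdered C hA m⁆ = (a + b) • normalOrdered C hA (m + s) := by
  ext v
  have fin := hasFiniteSupport_apply hA
  have apply_apply : ∀ k, u (C (m + k) (A k v)) =
      a • C (m + s + k) (A k v) + b • C (m + k) (A (k - s) v) + C (m + k) (A k (u v)) := by
    intro k
    have hC := LinearMap.congr_fun (huC (m + k)) (A k v)
    have hA := LinearMap.congr_fun (huA k) v
    simp only [Ring.lie_def, LinearMap.sub_apply, Module.End.mul_apply, LinearMap.smul_apply,
      sub_eq_iff_eq_add] at hC hA
    rw [hC, hA, map_add, map_smul, add_right_comm m k s, ← add_assoc]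
  have shifted : ∑ᶠ k, C (m + k) (A (k - s) v) = ∑ᶠ k, C (m + s + k) (A k v) := by
    rw [← finsum_comp_equiv (Equiv.addRight s)]
    simp [add_assoc, add_comm s]
  have fin_shifted : (fun k => C (m + k) (A (k - s) v)).HasFiniteSupport := by
    simpa [Function.comp_def] using
      (fin (fun k => C (m + (k + s))) v).comp_of_injective (sub_left_injective (b := s))
  have fin_left : (fun k => a • C (m + s + k) (A k v)).HasFiniteSupport :=
    (fin _ v).smul_right fun _ => a
  have fin_right : (fun k => b • C (m + k) (A (k - s) v)).HasFiniteSupport :=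
    fin_shifted.smul_right fun _ => b
  have fin_add : (fun k => a • C (m + s + k) (A k v) +
      b • C (m + k) (A (k - s) v)).HasFiniteSupport := fin_left.add fin_right
  calc ⁅u, normalOrdered C hA m⁆ v
      = u (∑ᶠ k, C (m + k) (A k v)) - ∑ᶠ k, C (m + k) (A k (u v)) := rfl
    _ = ∑ᶠ k, a • C (m + s + k) (A k v) + ∑ᶠ k, b • C (m + k) (A (k - s) v) := by
        rw [map_finsum u (fin _ v), finsum_congr apply_apply,
          finsum_add_distrib fin_add (fin _ (u v)), add_sub_cancel_right,
          finsum_add_distrib fin_left fin_right]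
    _ = (a + b) • ∑ᶠ k, C (m + s + k) (A k v) := by
        rw [← smul_finsum' a (fin _ v), ← smul_finsum' b fin_shifted, shifted, add_smul]

end NormalOrdered

section CovariantFamilies

variable {K : Type*} [CommRing K] {R : Type*} [Ring R] [Algebra K R] {u : R} {a : K} {s : ℤ}

/-- The families of elements `A m n` on which bracketing with `u` acts as the first-order index
shift `A m n ↦ a (A (m + s) n + A m (n + s))`. -/
def covariantFamilies (u : R) (a : K) (s : ℤ) : Submodule K (ℤ → ℤ → R) where
  carrier := {A | ∀ m n, ⁅u, A m n⁆ = a • (A (m + s) n + A m (n + s))}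
  add_mem' hA hB m n := by
    simp only [Pi.add_apply, lie_add, hA m n, hB m n, smul_add]
    abel
  zero_mem' m n := by simp
  smul_mem' c A hA m n := by
    simp only [Pi.smul_apply, lie_smul, hA m n, smul_add, smul_comm c a]

lemma mul_mem_covariantFamilies {V : ℤ → R} (hV : ∀ m, ⁅u, V m⁆ = a • V (m + s)) :
    (fun m n => V m * V n) ∈ covariantFamilies u a s := fun m n => by
  simp only [lie_mul_right, hV, smul_mul_assoc, mul_smul_comm, smul_add]

variable {A : ℤ → ℤ → R}

lemma swap_mem_covariantFamilies (hA : A ∈ covariantFamilies u a s) :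
    (fun m n => A n m) ∈ covariantFamilies u a s := fun m n => by
  simp only [hA n m, add_comm]

lemma shift_mem_covariantFamilies (hA : A ∈ covariantFamilies u a s) (p q : ℤ) :
    (fun m n => A (m + p) (n + q)) ∈ covariantFamilies u a s := fun m n => by
  simp only [hA (m + p) (n + q), add_right_comm]

end CovariantFamilies

section QuadraticRelator

variable {K : Type*} [Field K] {R : Type*} [Ring R] [Algebra K R] {u : R} {a : K} {s : ℤ}

lemma alternating_mem_covariantFamilies (hs : Odd s) :
    (fun m n => if m = -n then algebraMap K R ((-1) ^ n) else 0) ∈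
      covariantFamilies u a s := fun m n => by
  have hlie : ∀ c : K, ⁅u, algebraMap K R c⁆ = 0 := fun c => by
    rw [Ring.lie_def, Algebra.commutes, sub_self]
  have hsign : (-1 : K) ^ (n + s) = -(-1) ^ n := by
    rw [zpow_add₀ (by simp), hs.neg_one_zpow, mul_neg_one]
  have hiff : m = -(n + s) ↔ m + s = -n := by omega
  by_cases h : m + s = -n
  · simp only [hiff, h, if_true, hsign, map_neg, add_neg_cancel, smul_zero]
    split <;> simp [hlie]
  · simp only [hiff, h, if_false, add_zero, smul_zero]
    split <;> simp [hlie]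

/-- The difference of the two sides of the quadratic relation at `(m, n)`, for operators `V`. -/
def quadraticRelator (t : K) (V : ℤ → R) (m n : ℤ) : R :=
  (1 - t ^ 2) • (V m * V n + V n * V m) +
    t • (V (m - 1) * V (n + 1) - V (n + 1) * V (m - 1) +
      V (n - 1) * V (m + 1) - V (m + 1) * V (n - 1)) -
    (2 * (1 - t) ^ 2) • if m = -n then algebraMap K R ((-1) ^ n) else 0

lemma quadraticRelator_mem_covariantFamilies (t : K) {V : ℤ → R} (hs : Odd s)
    (hV : ∀ m, ⁅u, V m⁆ = a • V (m + s)) :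
    quadraticRelator t V ∈ covariantFamilies u a s := by
  have product := mul_mem_covariantFamilies hV
  have swapped := swap_mem_covariantFamilies product
  have lower_raise := shift_mem_covariantFamilies product (-1) 1
  have raise_lower := shift_mem_covariantFamilies product 1 (-1)
  have swapped_lower_raise := shift_mem_covariantFamilies swapped (-1) 1
  have swapped_raise_lower := shift_mem_covariantFamilies swapped 1 (-1)
  have delta := alternating_mem_covariantFamilies (R := R) (u := u) (a := a) hs
  exact sub_mem
    (add_mem (Submodule.smul_mem _ (1 - t ^ 2) (add_mem product swapped))
      (Submodule.smul_mem _ t (sub_mem (add_mem (sub_mem lower_raise swapped_lower_raise)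
        swapped_raise_lower) raise_lower)))
    (Submodule.smul_mem _ (2 * (1 - t) ^ 2) delta)

end QuadraticRelator

section Polynomial

lemma lie_derivation_mulLeft {K : Type*} [CommRing K] {A : Type*} [CommRing A] [Algebra K A]
    (D : Derivation K A A) (a : A) :
    ⁅(D.toLinearMap : Module.End K A), LinearMap.mulLeft K a⁆ = LinearMap.mulLeft K (D a) := by
  ext b
  simp [Ring.lie_def, mul_comm b]

variable {K : Type*} [CommRing K] {σ : Type*}

lemma commute_pderiv (i j : σ) :
    Commute ((pderiv i).toLinearMap : Module.End K (MvPolynomial σ K)) (pderiv j).toLinearMap := by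
  have lie_eq_zero :
      ⁅(pderiv i : Derivation K (MvPolynomial σ K) (MvPolynomial σ K)), pderiv j⁆ = 0 :=
    derivation_ext fun k => by
      classical
      rw [Derivation.commutator_apply]
      simp [pderiv_X, Pi.single_apply, apply_ite]
  exact LinearMap.ext fun f => sub_eq_zero.1 (DFunLike.congr_fun lie_eq_zero f)

lemma pderiv_mem_restrictSupport {w : σ → ℕ} {N k : ℕ} {f : MvPolynomial σ K}
    (hf : f ∈ restrictSupport K {s | Finsupp.weight w s + k < N}) (i : σ) :
    pderiv i f ∈ restrictSupport K {s | Finsupp.weight w s + (k + w i) < N} := by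
  rw [mem_restrictSupport_iff] at hf ⊢
  intro s hs
  have hmem : s + Finsupp.single i 1 ∈ f.support := mem_support_iff.2 fun h =>
    mem_support_iff.1 hs (by rw [coeff_pderiv, h, zero_mul])
  have hlt : Finsupp.weight w (s + Finsupp.single i 1) + k < N := hf hmem
  rw [map_add, Finsupp.weight_single, one_smul, add_assoc, add_comm (w i)] at hlt
  exact hlt

lemma eq_zero_of_mem_restrictSupport {w : σ → ℕ} {N k : ℕ} {f : MvPolynomial σ K}
    (hf : f ∈ restrictSupport K {s | Finsupp.weight w s + k < N}) (hk : N ≤ k) : f = 0 := by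
  rw [mem_restrictSupport_iff] at hf
  refine support_eq_empty.1 (eq_empty_of_forall_notMem fun s hs => ?_)
  have hlt : Finsupp.weight w s + k < N := hf hs
  omega

variable [IsDomain K] [CharZero K]

lemma eq_bot_of_pderiv_mem {N : Submodule K (MvPolynomial σ K)}
    (hN : ∀ i, ∀ f ∈ N, pderiv i f ∈ N) (hconst : ∀ f ∈ N, constantCoeff f = 0) : N = ⊥ := by
  have coeff_eq_zero : ∀ (d : ℕ) (m : σ →₀ ℕ), m.degree = d → ∀ f ∈ N, coeff m f = 0 := by
    intro d
    induction d with
    | zero =>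
      intro m hm f hf
      rw [(Finsupp.degree_eq_zero_iff m).1 hm]
      exact hconst f hf
    | succ d ih =>
      intro m hm f hf
      obtain ⟨i, hi⟩ : ∃ i, m i ≠ 0 := by
        by_contra! h
        simp [show m = 0 from Finsupp.ext h] at hm
      obtain ⟨m, rfl⟩ : ∃ m', m = m' + Finsupp.single i 1 :=
        ⟨m - Finsupp.single i 1, (tsub_add_cancel_of_le (by simpa [Nat.one_le_iff_ne_zero])).symm⟩
      have h := ih m (by simpa using hm) _ (hN i f hf)
      rw [coeff_pderiv] at h
      exact (mul_eq_zero.1 h).resolve_right (Nat.cast_add_one_ne_zero _)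
  exact (Submodule.eq_bot_iff N).2 fun f hf => MvPolynomial.ext _ _ fun m =>
    by simpa using coeff_eq_zero _ m rfl f hf

lemma eq_zero_of_mem_covariantFamilies {A : ℤ → ℤ → Module.End K (MvPolynomial σ K)}
    (hder : ∀ i, ∃ (a : K) (s : ℤ),
      A ∈ covariantFamilies (R := Module.End K (MvPolynomial σ K)) (pderiv i).toLinearMap a s)
    (hmul : ∀ i, ∃ (a : K) (s : ℤ),
      A ∈ covariantFamilies (R := Module.End K (MvPolynomial σ K)) (LinearMap.mulLeft K (X i)) a s)
    (hvac : ∀ m n, constantCoeff (A m n 1) = 0) : A = 0 := by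
  let N : Submodule K (MvPolynomial σ K) :=
    Submodule.span K (Set.range fun p : ℤ × ℤ => A p.1 p.2 1)
  have mem_N : ∀ m n, A m n 1 ∈ N := fun m n => Submodule.subset_span ⟨(m, n), rfl⟩
  have hN : N = ⊥ := by
    refine eq_bot_of_pderiv_mem (fun i => ?_) ?_
    · change N ≤ N.comap (pderiv i).toLinearMap
      refine Submodule.span_le.2 ?_
      rintro _ ⟨⟨m, n⟩, rfl⟩
      obtain ⟨a, s, hA⟩ := hder i
      have h : pderiv i (A m n 1) = a • (A (m + s) n 1 + A m (n + s) 1) := by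
        simpa [Ring.lie_def] using LinearMap.congr_fun (hA m n) 1
      simpa [h] using N.smul_mem a (N.add_mem (mem_N _ _) (mem_N _ _))
    · change N ≤ LinearMap.ker (lcoeff K (0 : σ →₀ ℕ))
      rw [Submodule.span_le]
      rintro _ ⟨⟨m, n⟩, rfl⟩
      exact hvac m n
  have apply_one : ∀ m n, A m n 1 = 0 := fun m n => (Submodule.mem_bot K).1 (hN ▸ mem_N m n)
  have apply_eq_zero : ∀ f m n, A m n f = 0 := by
    intro f
    induction f using MvPolynomial.induction_on with
    | C c => intro m n; rw [C_eq_smul_one, map_smul, apply_one, smul_zero]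
    | add f g hf hg => intro m n; rw [map_add, hf, hg, add_zero]
    | mul_X f i hf =>
      intro m n
      obtain ⟨a, s, hA⟩ := hmul i
      simpa [Ring.lie_def, hf, mul_comm] using LinearMap.congr_fun (hA m n) f
  exact funext₂ fun m n => LinearMap.ext fun f => apply_eq_zero f m n

end Polynomial

section PowerSeries

variable {K : Type*} [CommRing K]

lemma one_sub_C_mul_X_mul_mk_pow (s : K) :
    (1 - PowerSeries.C s * PowerSeries.X) * PowerSeries.mk (fun n => s ^ n) = 1 := by
  simpa [mul_comm, PowerSeries.rescale_mk] using
    congrArg (PowerSeries.rescale s) (PowerSeries.mk_one_mul_one_sub_eq_one K)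

lemma eq_of_X_mul_derivative_eq [IsDomain K] [CharZero K] {f g y : PowerSeries K}
    (hy : PowerSeries.constantCoeff y = 0)
    (hf : PowerSeries.X * PowerSeries.derivative K f = y * f)
    (hg : PowerSeries.X * PowerSeries.derivative K g = y * g)
    (hfg : PowerSeries.constantCoeff f = PowerSeries.constantCoeff g) : f = g := by
  have hsub : PowerSeries.X * PowerSeries.derivative K (f - g) = y * (f - g) := by
    rw [map_sub, mul_sub, hf, hg, mul_sub]
  ext n
  rw [← sub_eq_zero, ← map_sub]
  induction n using Nat.strong_induction_on with
  | _ n ih =>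
    rcases n with _ | n
    · simp [hfg]
    · have hzero : PowerSeries.coeff (n + 1) (y * (f - g)) = 0 := by
        rw [PowerSeries.coeff_mul]
        refine sum_eq_zero fun p hp => ?_
        rcases p.1.eq_zero_or_pos with h | h
        · rw [h, PowerSeries.coeff_zero_eq_constantCoeff_apply, hy, zero_mul]
        · rw [ih p.2 (by have := mem_antidiagonal.1 hp; omega), mul_zero]
      rw [← hsub, PowerSeries.coeff_succ_X_mul, PowerSeries.coeff_derivative] at hzero
      exact (mul_eq_zero.1 hzero).resolve_right (Nat.cast_add_one_ne_zero n)

end PowerSeries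

section ContractionSeries

variable {K : Type*} [Field K] [CharZero K]

lemma X_mul_derivative_mk_expCoeff (x : ℕ → K) :
    PowerSeries.X * PowerSeries.derivative K (PowerSeries.mk fun n => expCoeff K x n) =
      PowerSeries.mk (fun n => n * x n) * PowerSeries.mk fun n => expCoeff K x n := by
  ext n
  rcases n with _ | n
  · simp
  · rw [PowerSeries.coeff_succ_X_mul, PowerSeries.coeff_derivative, PowerSeries.coeff_mul]
    simp only [PowerSeries.coeff_mk]
    rw [← natCast_mul_expCoeff, Nat.cast_succ, Nat.cast_succ, mul_comm]

/-- The exponents of the contraction `exp (∑ₙ 2 (tⁿ - 1) wⁿ / n)`, `n` odd, of two copies of the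
vertex operator. -/
def contraction (t : K) (n : ℕ) : K := if Odd n then 2 * (t ^ n - 1) / n else 0

lemma mk_natCast_mul_contraction (t : K) :
    PowerSeries.mk (fun n => n * contraction t n) =
      PowerSeries.mk (fun n => t ^ n) - PowerSeries.mk (fun n => (-t) ^ n) -
        PowerSeries.mk (fun n => 1 ^ n) + PowerSeries.mk (fun n => (-1) ^ n) := by
  ext n
  rcases n.even_or_odd with hn | hn
  · simp [contraction, hn.neg_pow, Nat.not_odd_iff_even.2 hn]
  · have : (n : K) ≠ 0 := Nat.cast_ne_zero.2 hn.pos.ne'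
    simp only [contraction, if_pos hn, hn.neg_pow, PowerSeries.coeff_mk, map_add, map_sub]
    field_simp
    ring

lemma mul_mk_expCoeff_contraction (t : K) :
    (1 + PowerSeries.X) * (1 - PowerSeries.C t * PowerSeries.X) *
        PowerSeries.mk (fun n => expCoeff K (contraction t) n) =
      (1 - PowerSeries.X) * (1 + PowerSeries.C t * PowerSeries.X) := by
  have ht := one_sub_C_mul_X_mul_mk_pow t
  have hnt := one_sub_C_mul_X_mul_mk_pow (-t)
  have h1 := one_sub_C_mul_X_mul_mk_pow (1 : K)
  have hn1 := one_sub_C_mul_X_mul_mk_pow (-1 : K)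
  have hA := X_mul_derivative_mk_expCoeff (contraction t)
  rw [mk_natCast_mul_contraction] at hA
  simp only [map_neg, map_one, neg_mul, one_mul, sub_neg_eq_add] at hnt h1 hn1
  -- Both sides have the logarithmic derivative `t / (1 + t X) - 1 / (1 - X)`.
  refine eq_of_X_mul_derivative_eq (y := PowerSeries.X *
    (PowerSeries.C t * PowerSeries.mk (fun n => (-t) ^ n) - PowerSeries.mk fun n => 1 ^ n))
    (by simp) ?_ ?_ ?_
  · simp only [Derivation.leibniz, map_add, map_sub, Derivation.map_one_eq_zero,
      PowerSeries.derivative_X, PowerSeries.derivative_C, smul_eq_mul]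
    generalize PowerSeries.mk (fun n : ℕ => expCoeff K (contraction t) n) = A at *
    linear_combination (1 + PowerSeries.X) * (1 - PowerSeries.C t * PowerSeries.X) * hA +
      A * (1 + PowerSeries.X) * ht + A * (1 - PowerSeries.C t * PowerSeries.X) * hn1 -
      A * (1 + PowerSeries.X) * (1 - PowerSeries.C t * PowerSeries.X) * (hnt + h1)
  · simp only [Derivation.leibniz, map_add, map_sub, Derivation.map_one_eq_zero,
      PowerSeries.derivative_X, PowerSeries.derivative_C, smul_eq_mul]
    linear_combination PowerSeries.X * (1 + PowerSeries.C t * PowerSeries.X) * h1 -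
      PowerSeries.X * PowerSeries.C t * (1 - PowerSeries.X) * hnt
  · simp [expCoeff_zero]

lemma expCoeff_contraction_recurrence (t : K) (n : ℤ) :
    expCoeff K (contraction t) n + (1 - t) * expCoeff K (contraction t) (n - 1)
        - t * expCoeff K (contraction t) (n - 2) =
      if n = 0 then 1 else if n = 1 then t - 1 else if n = 2 then -t else 0 := by
  rcases lt_or_ge n 0 with hn | hn
  · simp only [expCoeff_of_neg _ hn, expCoeff_of_neg _ (by omega : n - 1 < 0),
      expCoeff_of_neg _ (by omega : n - 2 < 0)]
    split_ifs <;> first | omega | simp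
  lift n to ℕ using hn
  set A := PowerSeries.mk fun k : ℕ => expCoeff K (contraction t) k with hA
  have hmul : A + PowerSeries.C (1 - t) * (PowerSeries.X * A) -
      PowerSeries.C t * (PowerSeries.X * (PowerSeries.X * A)) =
        1 + PowerSeries.C (t - 1) * PowerSeries.X -
          PowerSeries.C t * (PowerSeries.X * PowerSeries.X) := by
    rw [map_sub, map_sub, map_one]
    linear_combination mul_mk_expCoeff_contraction t
  generalize 1 - t = b, t - 1 = c at hmul ⊢
  have hcoeff := congrArg (PowerSeries.coeff n) hmul
  rcases n with _ | _ | n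
  · simpa [hA, expCoeff_of_neg] using hcoeff
  · simpa [hA, expCoeff_of_neg] using hcoeff
  · have h₁ : ((n + 2 : ℕ) : ℤ) - 1 = (n + 1 : ℕ) := by omega
    have h₂ : ((n + 2 : ℕ) : ℤ) - 2 = n := by omega
    have h₃ : ((n + 2 : ℕ) : ℤ) ≠ 0 ∧ ((n + 2 : ℕ) : ℤ) ≠ 1 := by omega
    have h₄ : ((n + 2 : ℕ) : ℤ) = 2 ↔ n = 0 := by omega
    simp only [h₁, h₂, h₃, h₄, if_false]
    simpa [hA, PowerSeries.coeff_succ_X_mul, PowerSeries.coeff_one, PowerSeries.coeff_X,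
      neg_ite] using hcoeff

lemma contraction_identity (t : K) (n : ℤ) :
    (1 - t ^ 2) * (expCoeff K (contraction t) n + expCoeff K (contraction t) (-n)) +
        t * (expCoeff K (contraction t) (n + 1) - expCoeff K (contraction t) (-n - 1) +
          expCoeff K (contraction t) (-n + 1) - expCoeff K (contraction t) (n - 1)) =
      2 * (-1) ^ n * (1 - t) ^ 2 := by
  have recurrence := expCoeff_contraction_recurrence t
  set a := expCoeff K (contraction t)
  let s : ℤ → K := fun n => (1 - t ^ 2) * (a n + a (-n)) +
    t * (a (n + 1) - a (-n - 1) + a (-n + 1) - a (n - 1))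
  have at_zero : s 0 = 2 * (1 - t) ^ 2 := by
    have a_zero : a 0 = 1 := expCoeff_zero _
    have a_neg_one : a (-1) = 0 := expCoeff_of_neg _ (by omega)
    have a_one : a 1 + (1 - t) = t - 1 := by simpa [a_zero, a_neg_one] using recurrence 1
    simp only [s, neg_zero, zero_add, zero_sub, a_zero, a_neg_one]
    linear_combination 2 * t * a_one
  -- The right-hand sides of the recurrence cancel because `(t + w) (1 + t w) (1 - w)` is
  -- antipalindromic in `w`.
  have alternates : ∀ n, s (n + 1) = -s n := fun n => by
    have cancel : t * (a (n + 2) + (1 - t) * a (n + 2 - 1) - t * a (n + 2 - 2)) +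
        (a (n + 1) + (1 - t) * a (n + 1 - 1) - t * a (n + 1 - 2)) +
        t * (a (1 - n) + (1 - t) * a (1 - n - 1) - t * a (1 - n - 2)) +
        (a (-n) + (1 - t) * a (-n - 1) - t * a (-n - 2)) = 0 := by
      simp only [recurrence]
      split_ifs <;> first | omega | ring
    simp only [s]
    ring_nf at cancel ⊢
    linear_combination cancel
  change s n = _
  induction n with
  | zero => simpa using at_zero
  | succ n ih => rw [alternates, ih, zpow_add_one₀ (by simp)]; ring
  | pred n ih =>
    rw [← neg_eq_iff_eq_neg.2 (alternates (-n - 1)), sub_add_cancel, ih, zpow_sub_one₀ (by simp)]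
    ring

end ContractionSeries

section Operators

variable {F : Type} [Field F]

/-- The derivation `∂/∂p_n` as an endomorphism of `Γ`; it is `0` for even `n`, as is `pder n`. -/
def pderEnd (F : Type) [Field F] (n : ℕ) : Module.End F (Gam F) :=
  if h : Odd n then (pderiv (⟨n, h⟩ : OddIdx)).toLinearMap else 0

lemma pderEnd_apply (n : ℕ) (f : Gam F) : pderEnd F n f = pder n f := by
  unfold pderEnd pder
  split <;> rfl

lemma pderEnd_coe (i : OddIdx) : pderEnd F i = (pderiv i).toLinearMap := dif_pos i.2

lemma pvar_coe (i : OddIdx) : pvar F i = X i := dif_pos i.2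

lemma constantCoeff_pvar (n : ℕ) : constantCoeff (pvar F n) = 0 := by
  unfold pvar
  split <;> simp

lemma commute_pderEnd (i j : ℕ) : Commute (pderEnd F i) (pderEnd F j) := by
  unfold pderEnd
  split_ifs
  · exact commute_pderiv _ _
  all_goals simp

lemma lie_pderEnd_mulLeft (n : ℕ) (f : Gam F) :
    ⁅pderEnd F n, LinearMap.mulLeft F f⁆ = LinearMap.mulLeft F (pder n f) := by
  unfold pderEnd pder
  split
  · exact lie_derivation_mulLeft _ f
  · simp [Ring.lie_def]

lemma pder_pvar (i j : ℕ) : pder i (pvar F j) = if Odd i ∧ i = j then 1 else 0 := by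
  by_cases hi : Odd i <;> by_cases hj : Odd j
  · simp [pder, pvar, hi, hj, pderiv_X, Pi.single_apply, eq_comm]
  · have hij : i ≠ j := fun h => hj (h ▸ hi)
    simp [pder, pvar, hj, hij]
  all_goals simp [pder, hi]

lemma crea_eq_expCoeff (c : ℕ → F) (m : ℤ) :
    crea c m = expCoeff F (fun j => c j • pvar F j) m := by
  rw [expCoeff_smul]
  simp only [crea, partitionSum, pprod, Multiset.prod_map_toList, smul_smul, div_eq_inv_mul]

/-- The coefficient of `z ^ (-k)` in `exp (∑ₙ dₙ (∂/∂p_n) z⁻ⁿ)`, as an endomorphism of `Γ`. -/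
def annihEnd (d : ℕ → F) (k : ℤ) : Module.End F (Gam F) :=
  expCoeff F (fun j => d j • pderEnd F j) k

lemma Dmult_eq_prod_apply (ρ : Multiset ℕ) (f : Gam F) :
    Dmult ρ f = (ρ.toList.map (pderEnd F)).prod f := by
  unfold Dmult
  induction ρ.toList with
  | nil => rfl
  | cons j l ih => rw [List.foldr_cons, ih, ← pderEnd_apply]; rfl

lemma annihEnd_natCast_apply (d : ℕ → F) (k : ℕ) (f : Gam F) : annihEnd d k f = annih d k f := by
  rw [annihEnd, expCoeff_smul, partitionSum_natCast, annih, LinearMap.sum_apply]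
  simp only [Dmult_eq_prod_apply, LinearMap.smul_apply, smul_smul, div_eq_inv_mul]

lemma weight_lt_bnd {f : Gam F} {s : OddIdx →₀ ℕ} (hs : s ∈ f.support) :
    Finsupp.weight (Subtype.val : OddIdx → ℕ) s < bnd f := by
  have weight_le : Finsupp.weight (Subtype.val : OddIdx → ℕ) s ≤
      f.totalDegree * f.vars.sup fun i => (i : ℕ) := by
    calc Finsupp.weight (Subtype.val : OddIdx → ℕ) s = s.sum fun i e => e * i := by
          simp [Finsupp.weight_apply]
      _ ≤ s.sum fun _ e => e * f.vars.sup fun i => (i : ℕ) :=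
          sum_le_sum fun i hi => Nat.mul_le_mul_left _ <|
            le_sup (f := fun i : OddIdx => (i : ℕ)) <| (mem_vars_iff_mem_support i).2 ⟨s, hs, hi⟩
      _ = (s.sum fun _ e => e) * f.vars.sup fun i => (i : ℕ) := (Finsupp.sum_mul _ _).symm
      _ ≤ _ := Nat.mul_le_mul_right _ (le_totalDegree hs)
  exact weight_le.trans_lt <| Nat.lt_succ_of_le <|
    Nat.mul_le_mul (Nat.le_succ _) (Nat.le_succ _)

lemma annihEnd_apply_eq_zero (d : ℕ → F) {f : Gam F} {k : ℤ} (hk : k ∉ Set.Ico 0 (bnd f : ℤ)) :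
    annihEnd d k f = 0 := by
  rcases lt_or_ge k 0 with hneg | hpos
  · rw [annihEnd, expCoeff_of_neg _ hneg, LinearMap.zero_apply]
  lift k to ℕ using hpos
  let W (k : ℕ) : Submodule F (Gam F) :=
    restrictSupport F {s | Finsupp.weight (Subtype.val : OddIdx → ℕ) s + k < bnd f}
  have hW : ∀ j k, ∀ v ∈ W k, (d j • pderEnd F j) v ∈ W (k + j) := by
    intro j k v hv
    refine (W _).smul_mem _ ?_
    rw [pderEnd_apply, pder]
    split
    case isTrue hj => exact pderiv_mem_restrictSupport (w := Subtype.val) hv ⟨j, hj⟩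
    case isFalse => exact zero_mem _
  have mem_W : annihEnd d k f ∈ W (0 + k) :=
    expCoeff_apply_mem hW (k := 0) (fun s hs => weight_lt_bnd (f := f) hs) k
  rw [zero_add] at mem_W
  exact eq_zero_of_mem_restrictSupport mem_W (by simpa using hk)

lemma hasFiniteSupport_annihEnd_apply (d : ℕ → F) (f : Gam F) :
    (fun k => annihEnd d k f).HasFiniteSupport :=
  (Set.finite_Ico 0 (bnd f : ℤ)).subset fun _ hk => by_contra fun h =>
    hk (annihEnd_apply_eq_zero d h)

/-- The coefficient of `z ^ m` in the vertex operator `exp (∑ₙ cₙ p_n zⁿ) exp (∑ₙ dₙ (∂/∂p_n) z⁻ⁿ)`,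
as an endomorphism of `Γ`. -/
def vertexEnd (c d : ℕ → F) : ℤ → Module.End F (Gam F) :=
  normalOrdered (fun m => LinearMap.mulLeft F (crea c m)) (hasFiniteSupport_annihEnd_apply d)

lemma vertexEnd_apply (c d : ℕ → F) (m : ℤ) (f : Gam F) : vertexEnd c d m f = vop c d m f := by
  rw [vertexEnd, normalOrdered_apply, vop,
    finsum_eq_sum_of_support_subset (s := (range (bnd f)).map Nat.castEmbedding)]
  · simp [annihEnd_natCast_apply]
  · intro k hk
    have hk' : k ∈ Set.Ico 0 (bnd f : ℤ) := by_contra fun h =>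
      hk (by simp only [annihEnd_apply_eq_zero d h, map_zero])
    lift k to ℕ using hk'.1
    simpa using hk'.2

lemma constantCoeff_crea (c : ℕ → F) (m : ℤ) :
    constantCoeff (crea c m) = if m = 0 then 1 else 0 := by
  have h := map_expCoeff (aeval (0 : OddIdx → F)) (fun j => c j • pvar F j) m
  rw [← expCoeff_zero_left (K := F), crea_eq_expCoeff]
  simpa [aeval_zero', constantCoeff_pvar, Pi.zero_def] using h

lemma constantCoeff_vertexEnd_apply (c d : ℕ → F) (m : ℤ) (f : Gam F) :
    constantCoeff (vertexEnd c d m f) = constantCoeff (annihEnd d (-m) f) := by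
  have fin := hasFiniteSupport_apply (hasFiniteSupport_annihEnd_apply d)
    (fun k => LinearMap.mulLeft F (crea c (m + k))) f
  calc constantCoeff (vertexEnd c d m f)
      = ∑ᶠ k, constantCoeff (crea c (m + k)) * constantCoeff (annihEnd d k f) := by
        rw [vertexEnd, normalOrdered_apply]
        simpa using map_finsum (constantCoeff (σ := OddIdx) (R := F)) fin
    _ = constantCoeff (annihEnd d (-m) f) := by
        have vanish : ∀ k ≠ -m,
            constantCoeff (crea c (m + k)) * constantCoeff (annihEnd d k f) = 0 := fun k hk => by
          rw [constantCoeff_crea, if_neg (by omega), zero_mul]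
        rw [finsum_eq_single _ (-m) vanish, constantCoeff_crea, if_pos (add_neg_cancel m), one_mul]

lemma annihEnd_apply_one (d : ℕ → F) (k : ℤ) : annihEnd d k 1 = if k = 0 then 1 else 0 := by
  have pderEnd_one : ∀ j (_ : ℤ), (d j • pderEnd F j) (1 : Gam F) = (0 : ℕ → F) j • 1 :=
    fun j _ => by simp [pderEnd_apply, pder]
  rw [annihEnd, expCoeff_apply_of_shift (v := fun _ => 1) pderEnd_one k 0, expCoeff_zero_left]
  simp

lemma vertexEnd_apply_one (c d : ℕ → F) (m : ℤ) : vertexEnd c d m 1 = crea c m := by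
  rw [vertexEnd, normalOrdered_apply,
    finsum_eq_single _ 0 fun k hk => by simp [annihEnd_apply_one, hk]]
  simp [annihEnd_apply_one]

variable [CharZero F]

lemma lie_pderEnd_mulLeft_crea (c : ℕ → F) (i : OddIdx) (m : ℤ) :
    ⁅pderEnd F i, LinearMap.mulLeft F (crea c m)⁆ =
      c i • LinearMap.mulLeft F (crea c (m - i)) := by
  have mulLeft_crea : ∀ m, LinearMap.mulLeft F (crea c m) =
      expCoeff F (fun j => c j • LinearMap.mulLeft F (pvar F j)) m := fun m => by
    rw [crea_eq_expCoeff]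
    exact (map_expCoeff (Algebra.lmul F (Gam F)) _ m).trans (by simp only [map_smul]; rfl)
  rw [mulLeft_crea, mulLeft_crea, ← mul_one (c i)]
  refine lie_expCoeff_smul (y := fun j => LinearMap.mulLeft F (pvar F j))
    (fun j k => (Commute.all _ _).map (Algebra.lmul F (Gam F))) i.2.pos (fun j => ?_) c m
  rw [lie_pderEnd_mulLeft, pder_pvar]
  by_cases h : j = i <;> simp [h, i.2, eq_comm, Module.End.one_eq_id]

lemma lie_mulLeft_pvar_annihEnd (d : ℕ → F) (i : OddIdx) (k : ℤ) :
    ⁅LinearMap.mulLeft F (pvar F i), annihEnd d k⁆ = -d i • annihEnd d (k - i) := by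
  rw [← mul_neg_one]
  refine lie_expCoeff_smul commute_pderEnd i.2.pos (fun j => ?_) d k
  rw [← lie_skew, lie_pderEnd_mulLeft, pder_pvar]
  by_cases h : j = i <;> simp [h, i.2, Module.End.one_eq_id]

lemma lie_pderEnd_annihEnd (d : ℕ → F) (i : OddIdx) (k : ℤ) :
    ⁅pderEnd F i, annihEnd d k⁆ = 0 := by
  rw [← zero_smul F (annihEnd d (k - i)), ← mul_zero (d i)]
  refine lie_expCoeff_smul commute_pderEnd i.2.pos (fun j => ?_) d k
  rw [(commute_pderEnd _ _).lie_eq, map_zero, ite_self]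

lemma lie_pderEnd_vertexEnd (c d : ℕ → F) (i : OddIdx) (m : ℤ) :
    ⁅pderEnd F i, vertexEnd c d m⁆ = c i • vertexEnd c d (m + -i) := by
  rw [← add_zero (c i)]
  refine lie_normalOrdered _ (lie_pderEnd_mulLeft_crea c i) (fun k => ?_) m
  rw [lie_pderEnd_annihEnd, zero_smul]

lemma lie_mulLeft_pvar_vertexEnd (c d : ℕ → F) (i : OddIdx) (m : ℤ) :
    ⁅LinearMap.mulLeft F (pvar F i), vertexEnd c d m⁆ = -d i • vertexEnd c d (m + i) := by
  rw [← zero_add (-d i)]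
  refine lie_normalOrdered _ (fun k => ?_) (lie_mulLeft_pvar_annihEnd d i) m
  rw [zero_smul]
  exact ((Commute.all _ _).map (Algebra.lmul F (Gam F))).lie_eq

lemma annihEnd_apply_crea (c d : ℕ → F) (k m : ℤ) :
    annihEnd d k (crea c m) =
      expCoeff F (fun j => if Odd j then d j * c j else 0) k • crea c (m - k) := by
  refine expCoeff_apply_of_shift (v := crea c) (fun j n => ?_) k m
  split_ifs with hj
  · have h : pderEnd F j (crea c n) = c j • crea c (n - j) := by
      simpa [Ring.lie_def, pderEnd, hj] using
        LinearMap.congr_fun (lie_pderEnd_mulLeft_crea c ⟨j, hj⟩ n) 1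
    rw [LinearMap.smul_apply, h, smul_smul]
  · simp [pderEnd, hj]

lemma constantCoeff_vertexEnd_mul_apply_one (c d : ℕ → F) (m n : ℤ) :
    constantCoeff ((vertexEnd c d m * vertexEnd c d n) 1) =
      if m + n = 0 then expCoeff F (fun j => if Odd j then d j * c j else 0) n else 0 := by
  rw [Module.End.mul_apply, vertexEnd_apply_one, constantCoeff_vertexEnd_apply,
    annihEnd_apply_crea, constantCoeff_smul, constantCoeff_crea, sub_neg_eq_add, add_comm n m]
  split_ifs with h
  · rw [neg_eq_of_add_eq_zero_right h, smul_eq_mul, mul_one]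
  · rw [smul_zero]

end Operators

section Relations

variable {F : Type} [Field F]

/-- The annihilation coefficients of `G(z)`, with the parameter `t` in an arbitrary field; they are
`dG` when `t` is the indeterminate of `ℚ(t)`. -/
def annihG (t : F) (n : ℕ) : F := if Odd n then t ^ n - 1 else 0

/-- The component `G_m` of `G(z)`, with the parameter `t` in an arbitrary field; it is `Gop m` when
`t` is the indeterminate of `ℚ(t)`. -/
def GopAt (t : F) (m : ℤ) (f : Gam F) : Gam F := vop (cQ F) (annihG t) m f

/-- `GopAt t m` as an endomorphism of `Γ`. -/
def GEnd (t : F) : ℤ → Module.End F (Gam F) := vertexEnd (cQ F) (annihG t)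

lemma GEnd_apply (t : F) (m : ℤ) (f : Gam F) : GEnd t m f = GopAt t m f := vertexEnd_apply _ _ m f

variable [CharZero F] (t : F)

lemma constantCoeff_GEnd_mul_apply_one (m n : ℤ) :
    constantCoeff ((GEnd t m * GEnd t n) 1) =
      if m = -n then expCoeff F (contraction t) n else 0 := by
  have exponents : (fun j => if Odd j then annihG t j * cQ F j else 0) = contraction t := by
    ext j
    by_cases hj : Odd j
    · simp only [annihG, cQ, contraction, if_pos hj]
      ring
    · simp [contraction, hj]
  rw [GEnd, constantCoeff_vertexEnd_mul_apply_one, exponents]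
  simp only [eq_neg_iff_add_eq_zero]

lemma constantCoeff_quadraticRelator_GEnd_apply_one (m n : ℤ) :
    constantCoeff (quadraticRelator t (GEnd t) m n 1) = 0 := by
  have indices : (n = -m ↔ m = -n) ∧ (m - 1 = -(n + 1) ↔ m = -n) ∧ (n + 1 = -(m - 1) ↔ m = -n) ∧
      (n - 1 = -(m + 1) ↔ m = -n) ∧ (m + 1 = -(n - 1) ↔ m = -n) := by omega
  simp only [quadraticRelator, LinearMap.add_apply, LinearMap.sub_apply, LinearMap.smul_apply,
    map_add, map_sub, constantCoeff_smul, constantCoeff_GEnd_mul_apply_one, indices]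
  split_ifs with h
  · subst h
    simp only [Module.algebraMap_end_apply, constantCoeff_smul, map_one, smul_eq_mul]
    linear_combination contraction_identity t n
  · simp

lemma quadraticRelator_GEnd_eq_zero : quadraticRelator t (GEnd t) = 0 := by
  refine eq_zero_of_mem_covariantFamilies (fun i => ⟨cQ F i, -i, ?_⟩)
    (fun i => ⟨-annihG t i, i, ?_⟩) (constantCoeff_quadraticRelator_GEnd_apply_one t)
  · rw [← pderEnd_coe]
    exact quadraticRelator_mem_covariantFamilies t ((Int.odd_coe_nat _).2 i.2).neg
      (lie_pderEnd_vertexEnd _ _ i)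
  · rw [← pvar_coe]
    exact quadraticRelator_mem_covariantFamilies t ((Int.odd_coe_nat _).2 i.2)
      (lie_mulLeft_pvar_vertexEnd _ _ i)

end Relations

end QuadraticRelations

open QuadraticRelations in
theorem G_quadratic_relations_general {F : Type} [Field F] [CharZero F] (t : F) (m n : ℤ)
    (f : Gam F) :
    (1 - t ^ 2) • (GopAt t m (GopAt t n f) + GopAt t n (GopAt t m f))
      + t • (GopAt t (m - 1) (GopAt t (n + 1) f) - GopAt t (n + 1) (GopAt t (m - 1) f)
              + GopAt t (n - 1) (GopAt t (m + 1) f) - GopAt t (m + 1) (GopAt t (n - 1) f))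
    = if m = -n then ((2 * (-1 : F) ^ n * (1 - t) ^ 2) • f) else 0 := by
  have relator_apply : quadraticRelator t (GEnd t) m n f = 0 := by
    rw [quadraticRelator_GEnd_eq_zero]
    rfl
  simp only [quadraticRelator, LinearMap.add_apply, LinearMap.sub_apply, LinearMap.smul_apply,
    Module.End.mul_apply, GEnd_apply, sub_eq_zero] at relator_apply
  rw [relator_apply]
  split_ifs
  · rw [Module.algebraMap_end_apply, smul_smul, mul_right_comm]
  · rw [LinearMap.zero_apply, smul_zero]

end

noncomputable section

theorem G_quadratic_relations (m n : ℤ) (f : Gam FF) :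
    (1 - tt ^ 2) • (Gop m (Gop n f) + Gop n (Gop m f))
      + tt • (Gop (m - 1) (Gop (n + 1) f) - Gop (n + 1) (Gop (m - 1) f)
              + Gop (n - 1) (Gop (m + 1) f) - Gop (m + 1) (Gop (n - 1) f))
    = if m = -n then ((2 * (-1 : FF) ^ n * (1 - tt) ^ 2) • f) else 0 :=
  G_quadratic_relations_general tt m n f

end
end
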